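/- There is a constant q₀ depending only on n such that the following holds whenever q ≥ q₀: if 𝓕 is a ratio-sharp EKR-set of chambers, then 𝓕 contains no light chamber; that is, every chamber C ∈ 𝓕 has at least one index s ∈ [n] for which the s-space C_s is heavy with respect to 𝓕. -/

import Mathlib

open scoped Classical

open Module

section Defs

variable {F V : Type} [Field F] [AddCommGroup V] [Module F V]

/-- The orthogonal complement of a subspace with respect to a bilinear form. -/
def bperp (B : V →ₗ[F] V →ₗ[F] F) (W : Submodule F V) : Submodule F V :=
  ⨅ w ∈ W, LinearMap.ker (B w)

/-- A subspace is totally isotropic for `B`. -/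
def IsTotIso (B : V →ₗ[F] V →ₗ[F] F) (W : Submodule F V) : Prop :=
  ∀ u ∈ W, ∀ w ∈ W, B u w = 0

/-- `B` is an alternating form. -/
def IsAltForm (B : V →ₗ[F] V →ₗ[F] F) : Prop := ∀ v, B v v = 0

/-- `B` is nondegenerate. -/
def NondegForm (B : V →ₗ[F] V →ₗ[F] F) : Prop := ∀ v, (∀ w, B v w = 0) → v = 0

/-- A flag of type `J` of totally isotropic subspaces: entries outside `J` are `⊥`. -/
structure SFlag (B : V →ₗ[F] V →ₗ[F] F) (J : Finset ℕ) where
  space : ℕ → Submodule F V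
  isotropic : ∀ i ∈ J, IsTotIso B (space i)
  finrank_eq : ∀ i ∈ J, Module.finrank F (space i) = i
  mono : ∀ i ∈ J, ∀ j ∈ J, i ≤ j → space i ≤ space j
  eq_bot : ∀ i, i ∉ J → space i = ⊥

/-- Two flags of type `J` are opposite. -/
def FlagOpp {B : V →ₗ[F] V →ₗ[F] F} {J : Finset ℕ} (C C' : SFlag B J) : Prop :=
  ∀ i ∈ J, bperp B (C.space i) ⊓ C'.space i = ⊥

/-- An EKR-set of flags of type `J`: no two members are opposite. -/
def IsEKRFlags {B : V →ₗ[F] V →ₗ[F] F} {J : Finset ℕ} (𝓕 : Set (SFlag B J)) : Prop :=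
  ∀ C ∈ 𝓕, ∀ C' ∈ 𝓕, ¬ FlagOpp C C'

/-- Two subspaces are opposite. -/
def SpaceOpp (B : V →ₗ[F] V →ₗ[F] F) (S T : Submodule F V) : Prop :=
  bperp B S ⊓ T = ⊥

/-- An EKR-set of totally isotropic `s`-spaces: no two members are opposite. -/
def IsEKRSpaces (B : V →ₗ[F] V →ₗ[F] F) (s : ℕ) (𝓕 : Set (Submodule F V)) : Prop :=
  (∀ S ∈ 𝓕, IsTotIso B S ∧ Module.finrank F S = s) ∧
    ∀ S ∈ 𝓕, ∀ T ∈ 𝓕, ¬ SpaceOpp B S T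

/-- An `s`-space `S` is heavy with respect to a set `𝓕` of flags: every flag whose
`s`-th entry equals `S` belongs to `𝓕`. -/
def Heavy {B : V →ₗ[F] V →ₗ[F] F} {J : Finset ℕ} (𝓕 : Set (SFlag B J)) (s : ℕ)
    (S : Submodule F V) : Prop :=
  ∀ C : SFlag B J, C.space s = S → C ∈ 𝓕

end Defs

/-- `z_k = ∏_{i=1}^k (q^i-1)/(q-1)`. -/
noncomputable def zpol (q k : ℕ) : ℝ :=
  ∏ i ∈ Finset.Icc 1 k, ((q : ℝ) ^ i - 1) / ((q : ℝ) - 1)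

/-- The Gaussian binomial coefficient `[m choose k]_q` as a real number. -/
noncomputable def gaussq (q m k : ℕ) : ℝ :=
  ∏ i ∈ Finset.Icc 1 k, ((q : ℝ) ^ (m - k + i) - 1) / ((q : ℝ) ^ i - 1)

/-- `Φ_m^s` in `PS(n,1,q)`: the number of totally isotropic `s`-spaces containing a
fixed totally isotropic `m`-space. -/
noncomputable def PhiP (q n m s : ℕ) : ℝ :=
  gaussq q (n - m) (s - m) * ∏ i ∈ Finset.Icc 1 (s - m), ((q : ℝ) ^ (n - m + 1 - i) + 1)

/-! ### Linear algebra: the determinant argument -/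

lemma abs_det_of_quad {E : Type} [AddCommGroup E] [Module ℝ E] [FiniteDimensional ℝ E]
    (q : ℝ) (hq : 0 ≤ q) (t : Module.End ℝ E)
    (h : ∀ x, t (t x) = (q - 1) • t x + q • x) :
    |LinearMap.det t| = q ^ finrank ℝ (LinearMap.ker (t - q • (1 : Module.End ℝ E))) := by
  set W := LinearMap.ker (t - q • (1 : Module.End ℝ E)) with hW
  have hmem : ∀ x, x ∈ W ↔ t x = q • x := by
    intro x
    simp [hW, LinearMap.mem_ker, sub_eq_zero]
  have he : W ≤ W.comap t := by
    intro x hx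
    rw [Submodule.mem_comap, hmem]
    rw [hmem] at hx
    rw [hx, map_smul, hx]
  rw [LinearMap.det_eq_det_mul_det W t he]
  have h1 : LinearMap.restrict t (p := W) (q := W) he = q • LinearMap.id := by
    ext x
    have := (hmem x).1 x.2
    simp [LinearMap.restrict_apply, this]
  have h2 : W.mapQ W t he = (-1 : ℝ) • LinearMap.id := by
    apply LinearMap.ext
    intro y
    obtain ⟨x, rfl⟩ := Submodule.Quotient.mk_surjective W y
    rw [Submodule.mapQ_apply]
    simp only [LinearMap.smul_apply, LinearMap.id_apply]
    rw [← Submodule.Quotient.mk_smul, Submodule.Quotient.eq, hmem]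
    simp only [map_sub, map_smul, h]
    module
  rw [h1, h2, LinearMap.det_smul, LinearMap.det_smul, LinearMap.det_id, LinearMap.det_id]
  rw [abs_mul, mul_one, mul_one, abs_pow, abs_pow, abs_neg, abs_one, one_pow, mul_one,
    abs_of_nonneg hq]

lemma prod_range_mod {M : Type} [CommMonoid M] (n m : ℕ) (h : ℕ → M) :
    ∏ i ∈ Finset.range (m * n), h (i % n) = (∏ i ∈ Finset.range n, h i) ^ m := by
  induction m with
  | zero => simp
  | succ m ih =>
    rw [Nat.succ_mul, Finset.prod_range_add, ih, pow_succ]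
    congr 1
    apply Finset.prod_congr rfl
    intro i hi
    rw [Nat.mul_comm m n, Nat.mul_add_mod, Nat.mod_eq_of_lt (Finset.mem_range.1 hi)]

lemma prod_apply_eigen {E : Type} [AddCommGroup E] [Module ℝ E]
    (q : ℝ) (L : List (Module.End ℝ E)) (x : E) (h : ∀ t ∈ L, t x = q • x) :
    L.prod x = q ^ L.length • x := by
  induction L with
  | nil => simp
  | cons a L ih =>
    rw [List.prod_cons, Module.End.mul_apply, ih (fun t ht => h t (List.mem_cons_of_mem _ ht)),
      map_smul, h a List.mem_cons_self, List.length_cons, pow_succ, mul_smul]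

lemma list_prod_range {M : Type} [CommMonoid M] (m : ℕ) (h : ℕ → M) :
    ((List.range m).map h).prod = ∏ i ∈ Finset.range m, h i := by
  induction m with
  | zero => simp
  | succ m ih => rw [List.range_succ, List.map_append, List.prod_append, ih,
      Finset.prod_range_succ]; simp

lemma eig_bound {E : Type} [AddCommGroup E] [Module ℝ E] [FiniteDimensional ℝ E]
    (n : ℕ) (hn : 1 ≤ n) (q : ℝ) (hq : 1 ≤ q) (t : ℕ → Module.End ℝ E) (lam : ℝ) (hlam : lam < 0)
    (hE : 0 < finrank ℝ E)
    (hquad : ∀ s < n, ∀ x, t s (t s x) = (q - 1) • t s x + q • x)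
    (hprod : ((List.range (n * n)).map (fun i => t (i % n))).prod = lam • (1 : Module.End ℝ E)) :
    -q ^ (n * (n - 1)) ≤ lam := by
  set d := finrank ℝ E with hd
  let W : ℕ → Submodule ℝ E := fun s => LinearMap.ker (t s - q • (1 : Module.End ℝ E))
  have hmem : ∀ s x, x ∈ W s ↔ t s x = q • x := by
    intro s x
    simp [W, LinearMap.mem_ker, sub_eq_zero]
  have hq0 : 0 ≤ q := by linarith
  -- determinant
  have hdet : |lam| ^ d = (∏ s ∈ Finset.range n, q ^ finrank ℝ (W s)) ^ n := by
    have h1 := congrArg LinearMap.det hprod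
    rw [LinearMap.det_smul, map_one, mul_one, map_list_prod, List.map_map] at h1
    have h2 := congrArg abs h1
    rw [abs_pow] at h2
    rw [← hd] at h2
    rw [← h2, ← prod_range_mod n n (fun s => q ^ finrank ℝ (W s)), list_prod_range,
      Finset.abs_prod]
    apply Finset.prod_congr rfl
    intro i _
    exact abs_det_of_quad q hq0 _ (hquad _ (Nat.mod_lt _ hn))
  -- intersection is trivial
  have hinj : Function.Injective (LinearMap.pi (fun s : Fin n => (W s).mkQ)) := by
    rw [← LinearMap.ker_eq_bot, LinearMap.ker_eq_bot']
    intro x hx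
    have hxs : ∀ s < n, t s x = q • x := by
      intro s hs
      rw [← hmem]
      have := congrFun hx ⟨s, hs⟩
      simpa using this
    have h3 := prod_apply_eigen q ((List.range (n * n)).map (fun i => t (i % n))) x (by
      intro u hu
      obtain ⟨i, -, rfl⟩ := List.mem_map.1 hu
      exact hxs _ (Nat.mod_lt _ hn))
    rw [hprod] at h3
    simp only [LinearMap.smul_apply, Module.End.one_apply] at h3
    have h4 : (lam - q ^ ((List.range (n * n)).map (fun i => t (i % n))).length) • x = 0 := by
      rw [sub_smul, h3, sub_self]
    rcases smul_eq_zero.1 h4 with h5 | h5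
    · have : 0 ≤ q ^ ((List.range (n * n)).map (fun i => t (i % n))).length := by positivity
      linarith
    · exact h5
  have hle := LinearMap.finrank_le_finrank_of_injective hinj
  rw [Module.finrank_pi_fintype] at hle
  have hsum : ∑ s ∈ Finset.range n, finrank ℝ (W s) + d ≤ n * d := by
    have h6 : ∀ s : Fin n, finrank ℝ (E ⧸ W s) + finrank ℝ (W s) = d := fun s =>
      Submodule.finrank_quotient_add_finrank _
    have h7 := Finset.sum_congr rfl (fun s (_ : s ∈ Finset.univ) => h6 s)
    rw [Finset.sum_add_distrib] at h7
    rw [Finset.sum_range]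
    simp at h7
    omega
  have hfin : |lam| ^ d ≤ (q ^ (n * (n - 1))) ^ d := by
    rw [hdet, Finset.prod_pow_eq_pow_sum, ← pow_mul, ← pow_mul]
    apply pow_le_pow_right₀ hq
    obtain ⟨m, rfl⟩ : ∃ m, n = m + 1 := ⟨n - 1, by omega⟩
    simp only [Nat.add_sub_cancel]
    have : ∑ s ∈ Finset.range (m + 1), finrank ℝ (W s) ≤ m * d := by
      rw [Nat.succ_mul] at hsum; omega
    nlinarith
  have := (pow_le_pow_iff_left₀ (abs_nonneg _) (by positivity) hE.ne').1 hfin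
  rw [abs_of_neg hlam] at this
  linarith

lemma list_prod_restrict {E : Type} [AddCommGroup E] [Module ℝ E] (U : Submodule ℝ E)
    (t : ℕ → Module.End ℝ E) (t' : ℕ → Module.End ℝ U) (L : List ℕ)
    (h : ∀ i ∈ L, ∀ x : U, (t' i x : E) = t i x) (x : U) :
    (((L.map t').prod x : U) : E) = (L.map t).prod (x : E) := by
  induction L with
  | nil => simp
  | cons a L ih =>
    simp only [List.map_cons, List.prod_cons, Module.End.mul_apply]
    rw [h a List.mem_cons_self, ih (fun i hi => h i (List.mem_cons_of_mem _ hi))]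

lemma eig_bound_matrix {X : Type} [Fintype X] [DecidableEq X]
    (n : ℕ) (hn : 1 ≤ n) (q : ℝ) (hq : 1 ≤ q) (Ts : ℕ → Matrix X X ℝ) (T : Matrix X X ℝ)
    (hquad : ∀ s < n, Ts s * Ts s = (q - 1) • Ts s + q • 1)
    (hT : T = ((List.range (n * n)).map (fun i => Ts (i % n))).prod)
    (hcomm : ∀ s < n, Ts s * T = T * Ts s)
    (lam : ℝ) (x : X → ℝ) (hx : x ≠ 0) (hTx : T.mulVec x = lam • x) :
    -q ^ (n * (n - 1)) ≤ lam := by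
  rcases le_or_gt 0 lam with hlam | hlam
  · have : 0 ≤ q ^ (n * (n - 1)) := by positivity
    linarith
  let t : ℕ → Module.End ℝ (X → ℝ) := fun s => Matrix.toLinAlgEquiv' (Ts s)
  let U : Submodule ℝ (X → ℝ) := LinearMap.ker (Matrix.toLinAlgEquiv' T - lam • 1)
  have hU : ∀ y, y ∈ U ↔ T.mulVec y = lam • y := by
    intro y
    simp [U, sub_eq_zero]
  have hinv : ∀ s < n, ∀ y ∈ U, t s y ∈ U := by
    intro s hs y hy
    rw [hU] at hy ⊢
    simp only [t, Matrix.toLinAlgEquiv'_apply]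
    rw [Matrix.mulVec_mulVec, ← hcomm s hs, ← Matrix.mulVec_mulVec, hy, Matrix.mulVec_smul]
  let t' : ℕ → Module.End ℝ U := fun s =>
    if hs : s < n then LinearMap.restrict (t s) (hinv s hs) else 0
  have ht' : ∀ s < n, ∀ y : U, (t' s y : X → ℝ) = t s y := by
    intro s hs y
    simp [t', hs, LinearMap.restrict_apply]
  apply eig_bound n hn q hq t' lam hlam
  · have : Nontrivial U := ⟨⟨⟨x, (hU x).2 hTx⟩, 0, by simpa [Subtype.ext_iff] using hx⟩⟩
    exact Module.finrank_pos
  · intro s hs y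
    apply Subtype.ext
    simp only [Submodule.coe_add, Submodule.coe_smul]
    rw [ht' s hs, ht' s hs]
    simp only [t, Matrix.toLinAlgEquiv'_apply]
    rw [Matrix.mulVec_mulVec, hquad s hs, Matrix.add_mulVec, Matrix.smul_mulVec,
      Matrix.smul_mulVec, Matrix.one_mulVec]
  · apply LinearMap.ext
    intro y
    apply Subtype.ext
    have h1 := list_prod_restrict U (fun i => t (i % n)) (fun i => t' (i % n))
      (List.range (n * n)) (fun i _ z => ht' _ (Nat.mod_lt _ hn) z) y
    rw [h1]
    have h2 : (List.map (fun i => t (i % n)) (List.range (n * n))).prod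
        = Matrix.toLinAlgEquiv' T := by
      rw [hT, map_list_prod, List.map_map]
      rfl
    rw [h2]
    simpa using (hU y).1 y.2

lemma sharp_eq {X : Type} [Fintype X] [DecidableEq X]
    (n : ℕ) (hn : 1 ≤ n) (q : ℝ) (hq : 1 ≤ q) (Ts : ℕ → Matrix X X ℝ) (T : Matrix X X ℝ)
    (hsym : T.IsSymm)
    (hquad : ∀ s < n, Ts s * Ts s = (q - 1) • Ts s + q • 1)
    (hT : T = ((List.range (n * n)).map (fun i => Ts (i % n))).prod)
    (hcomm : ∀ s < n, Ts s * T = T * Ts s)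
    (hrow : T.mulVec 1 = q ^ (n * n) • 1)
    (f : X → ℝ) (hf : f ⬝ᵥ T.mulVec f = 0) (hff : f ⬝ᵥ f = f ⬝ᵥ 1)
    (hs : f ⬝ᵥ 1 = (Fintype.card X : ℝ) / (q ^ n + 1)) :
    T.mulVec f = q ^ (n * (n - 1)) • (1 - f) := by
  set μ : ℝ := q ^ (n * (n - 1)) with hμ
  have hk : q ^ (n * n) = μ * q ^ n := by
    rw [hμ, ← pow_add]
    congr 1
    obtain ⟨m, rfl⟩ : ∃ m, n = m + 1 := ⟨n - 1, by omega⟩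
    simp only [Nat.add_sub_cancel]
    ring
  set M : Matrix X X ℝ := T + μ • 1 with hM
  have hherm : M.IsHermitian := by
    rw [Matrix.IsHermitian, Matrix.conjTranspose_eq_transpose_of_trivial, hM,
      Matrix.transpose_add, hsym, Matrix.transpose_smul, Matrix.transpose_one]
  have hMv : ∀ v, M.mulVec v = T.mulVec v + μ • v := by
    intro v
    rw [hM, Matrix.add_mulVec, Matrix.smul_mulVec, Matrix.one_mulVec]
  have hpsd : M.PosSemidef := by
    rw [hherm.posSemidef_iff_eigenvalues_nonneg]
    intro i
    have h1 := hherm.mulVec_eigenvectorBasis i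
    have hne : (hherm.eigenvectorBasis i).ofLp ≠ 0 := by
      intro h0
      have := hherm.eigenvectorBasis.orthonormal.ne_zero i
      apply this
      ext j
      exact congrFun h0 j
    have h2 := eig_bound_matrix n hn q hq Ts T hquad hT hcomm (hherm.eigenvalues i - μ) _ hne (by
      rw [hMv] at h1
      rw [sub_smul, ← h1]
      simp)
    simp only [Pi.zero_apply]
    linarith
  set α : ℝ := 1 / (q ^ n + 1) with hα
  have hpos : 0 < q ^ n + 1 := by positivity
  have hMf : M.mulVec f = T.mulVec f + μ • f := by
    rw [hM, Matrix.add_mulVec, Matrix.smul_mulVec, Matrix.one_mulVec]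
  have hM1 : M.mulVec 1 = (μ * (q ^ n + 1)) • (1 : X → ℝ) := by
    rw [hM, Matrix.add_mulVec, Matrix.smul_mulVec, Matrix.one_mulVec, hrow, hk, ← add_smul]
    congr 1
    ring
  have hMg : M.mulVec (f - α • 1) = T.mulVec f + μ • f - μ • (1 : X → ℝ) := by
    rw [Matrix.mulVec_sub, Matrix.mulVec_smul, hMf, hM1, smul_smul]
    congr 2
    rw [hα]; field_simp
  have h1T : (1 : X → ℝ) ⬝ᵥ T.mulVec f = q ^ (n * n) * (f ⬝ᵥ 1) := by
    rw [Matrix.dotProduct_mulVec, ← Matrix.mulVec_transpose, hsym, hrow, smul_dotProduct,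
      dotProduct_comm, smul_eq_mul]
  have h11 : (1 : X → ℝ) ⬝ᵥ 1 = Fintype.card X := by simp
  have hzero : star (f - α • 1) ⬝ᵥ M.mulVec (f - α • 1) = 0 := by
    rw [hMg, star_trivial]
    simp only [sub_dotProduct, dotProduct_sub, dotProduct_add, dotProduct_smul, smul_dotProduct,
      smul_eq_mul]
    rw [hf, h1T, hff, h11, dotProduct_comm 1 f, hs, hk, hα]
    field_simp
    ring
  rw [hpsd.dotProduct_mulVec_zero_iff, hMg] at hzero
  rw [smul_sub]
  rw [sub_eq_zero] at hzero
  rw [← hzero]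
  simp

/-! ### Symplectic linear algebra -/

set_option linter.unusedSectionVars false

section Sympl

variable {F V : Type} [Field F] [AddCommGroup V] [Module F V]

lemma mem_bperp {B : V →ₗ[F] V →ₗ[F] F} {W : Submodule F V} {x : V} :
    x ∈ bperp B W ↔ ∀ w ∈ W, B w x = 0 := by
  simp [bperp, Submodule.mem_iInf]

lemma bperp_eq_orthogonal (B : V →ₗ[F] V →ₗ[F] F) (W : Submodule F V) :
    bperp B W = LinearMap.BilinForm.orthogonal B W := by
  ext x
  rw [mem_bperp, LinearMap.BilinForm.mem_orthogonal_iff]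

lemma alt_refl {B : V →ₗ[F] V →ₗ[F] F} (hA : IsAltForm B) {x y : V} (h : B x y = 0) :
    B y x = 0 :=
  (LinearMap.IsAlt.isRefl (B := B) hA) x y h

lemma nondeg_of {B : V →ₗ[F] V →ₗ[F] F} (hA : IsAltForm B) (hN : NondegForm B) :
    LinearMap.BilinForm.Nondegenerate B :=
  ⟨hN, fun y hy => hN y fun x => alt_refl hA (hy x)⟩

lemma bperp_anti (B : V →ₗ[F] V →ₗ[F] F) {W W' : Submodule F V} (h : W ≤ W') :
    bperp B W' ≤ bperp B W := by
  intro x hx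
  rw [mem_bperp] at hx ⊢
  exact fun w hw => hx w (h hw)

variable [FiniteDimensional F V]

lemma finrank_bperp {B : V →ₗ[F] V →ₗ[F] F} (hA : IsAltForm B) (hN : NondegForm B)
    (W : Submodule F V) : finrank F W + finrank F (bperp B W) = finrank F V := by
  rw [bperp_eq_orthogonal, LinearMap.BilinForm.finrank_orthogonal (nondeg_of hA hN)]
  have := Submodule.finrank_le W
  omega

lemma bperp_bperp {B : V →ₗ[F] V →ₗ[F] F} (hA : IsAltForm B) (hN : NondegForm B)
    (W : Submodule F V) : bperp B (bperp B W) = W := by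
  rw [bperp_eq_orthogonal, bperp_eq_orthogonal]
  exact LinearMap.BilinForm.orthogonal_orthogonal (nondeg_of hA hN)
    (LinearMap.IsAlt.isRefl (B := B) hA) W

lemma bperp_opp_symm {B : V →ₗ[F] V →ₗ[F] F} (hA : IsAltForm B) (hN : NondegForm B)
    {C D : Submodule F V} (hCD : finrank F C = finrank F D) (h : bperp B C ⊓ D = ⊥) :
    bperp B D ⊓ C = ⊥ := by
  have hdim := finrank_bperp hA hN C
  have hsup : bperp B C ⊔ D = ⊤ := by
    apply Submodule.eq_top_of_finrank_eq
    have := Submodule.finrank_sup_add_finrank_inf_eq (bperp B C) D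
    rw [h, finrank_bot] at this
    omega
  rw [eq_bot_iff]
  rintro x ⟨hx1, hx2⟩
  rw [Submodule.mem_bot]
  apply hN
  intro w
  have hw : w ∈ bperp B C ⊔ D := hsup ▸ Submodule.mem_top
  obtain ⟨y, hy, z, hz, rfl⟩ := Submodule.mem_sup.1 hw
  rw [map_add, mem_bperp.1 hy x hx2, zero_add]
  exact alt_refl hA (mem_bperp.1 hx1 z hz)

lemma exists_mem_inf_ne_zero {U W : Submodule F V}
    (h : finrank F V < finrank F U + finrank F W) : ∃ x ∈ U, x ∈ W ∧ x ≠ 0 := by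
  have h1 := Submodule.finrank_sup_add_finrank_inf_eq U W
  have h2 := Submodule.finrank_le (U ⊔ W)
  have h3 : U ⊓ W ≠ ⊥ := by
    intro h0
    rw [h0, finrank_bot] at h1
    omega
  obtain ⟨x, hx, hx0⟩ := Submodule.exists_mem_ne_zero_of_ne_bot h3
  exact ⟨x, hx.1, hx.2, hx0⟩

end Sympl

/-! ### Frames -/

section Frames

variable {F V : Type} [Field F] [AddCommGroup V] [Module F V] [FiniteDimensional F V]

/-- A sequence of vectors in which vectors at distance less than `n` are orthogonal,
and vectors at distance `n` are not. -/
def GoodSeq (B : V →ₗ[F] V →ₗ[F] F) (n : ℕ) (g : ℕ → V) : Prop :=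
  (∀ x y, x < y + n → y < x + n → B (g x) (g y) = 0) ∧ ∀ x, B (g x) (g (x + n)) ≠ 0

lemma goodSeq_span_perp {B : V →ₗ[F] V →ₗ[F] F} {n : ℕ} {g : ℕ → V} (hg : GoodSeq B n g)
    (k i : ℕ) (hi : i ≤ n) (v : V)
    (hv : v ∈ Submodule.span F (g '' Set.Ico (k + 1) (k + 1 + i))) : B v (g (k + n)) = 0 := by
  induction hv using Submodule.span_induction with
  | mem x hx =>
    obtain ⟨y, hy, rfl⟩ := hx
    have := hy.1
    have := hy.2
    exact hg.1 _ _ (by omega) (by omega)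
  | zero => simp
  | add x y _ _ hx hy => simp [hx, hy]
  | smul a x _ hx => simp [hx]

lemma image_Ico_succ (g : ℕ → V) (k i : ℕ) :
    g '' Set.Ico k (k + (i + 1)) = insert (g k) (g '' Set.Ico (k + 1) (k + 1 + i)) := by
  rw [← Set.image_insert_eq]
  congr 1
  ext x
  simp only [Set.mem_Ico, Set.mem_insert_iff]
  omega

lemma goodSeq_finrank {B : V →ₗ[F] V →ₗ[F] F} {n : ℕ} {g : ℕ → V} (hg : GoodSeq B n g)
    (i : ℕ) (hi : i ≤ n) : ∀ k, finrank F (Submodule.span F (g '' Set.Ico k (k + i))) = i := by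
  induction i with
  | zero => intro k; simp
  | succ i ih =>
    intro k
    rw [image_Ico_succ, Submodule.span_insert]
    have h1 := ih (by omega) (k + 1)
    have hnot : g k ∉ Submodule.span F (g '' Set.Ico (k + 1) (k + 1 + i)) := by
      intro hmem
      exact hg.2 k (goodSeq_span_perp hg k i (by omega) _ hmem)
    have hne : g k ≠ 0 := by
      intro h0
      exact hg.2 k (by simp [h0])
    have h2 := Submodule.finrank_sup_add_finrank_inf_eq (Submodule.span F {g k})
      (Submodule.span F (g '' Set.Ico (k + 1) (k + 1 + i)))
    have h3 : Submodule.span F {g k} ⊓ Submodule.span F (g '' Set.Ico (k + 1) (k + 1 + i)) = ⊥ := by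
      rw [← disjoint_iff, Submodule.disjoint_span_singleton' hne |> disjoint_comm.trans]
      exact hnot
    rw [h3, finrank_bot, finrank_span_singleton hne, h1] at h2
    omega

lemma goodSeq_iso {B : V →ₗ[F] V →ₗ[F] F} {n : ℕ} {g : ℕ → V} (hg : GoodSeq B n g)
    (k i : ℕ) (hi : i ≤ n) : IsTotIso B (Submodule.span F (g '' Set.Ico k (k + i))) := by
  intro u hu w hw
  induction hu using Submodule.span_induction with
  | mem x hx =>
    induction hw using Submodule.span_induction with
    | mem y hy =>
      obtain ⟨x', hx', rfl⟩ := hx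
      obtain ⟨y', hy', rfl⟩ := hy
      have := hx'.1
      have := hx'.2
      have := hy'.1
      have := hy'.2
      exact hg.1 _ _ (by omega) (by omega)
    | zero => simp
    | add x y _ _ hx hy => simp [hx, hy]
    | smul a x _ hx => simp [hx]
  | zero => simp
  | add x y _ _ hx hy => simp [hx, hy]
  | smul a x _ hx => simp [hx]

/-- The start of the window of the `i`-space at time `t`. -/
def winStart (n t i : ℕ) : ℕ := (t + n - i) / n

/-- The chamber at time `t` of the gallery attached to a good sequence. -/
def winFlag {B : V →ₗ[F] V →ₗ[F] F} {n : ℕ} {g : ℕ → V} (hg : GoodSeq B n g) (t : ℕ) :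
    SFlag B (Finset.Icc 1 n) where
  space i := if i ∈ Finset.Icc 1 n then
    Submodule.span F (g '' Set.Ico (winStart n t i) (winStart n t i + i)) else ⊥
  isotropic i hi := by
    rw [if_pos hi]
    exact goodSeq_iso hg _ _ (Finset.mem_Icc.1 hi).2
  finrank_eq i hi := by
    rw [if_pos hi]
    exact goodSeq_finrank hg _ (Finset.mem_Icc.1 hi).2 _
  mono i hi j hj hij := by
    rw [if_pos hi, if_pos hj]
    apply Submodule.span_mono
    apply Set.image_mono
    have h1 := Finset.mem_Icc.1 hi
    have h2 := Finset.mem_Icc.1 hj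
    have h3 : winStart n t j ≤ winStart n t i := Nat.div_le_div_right (by omega)
    have h4 : winStart n t i + i ≤ winStart n t j + j := by
      rcases hij.eq_or_lt with rfl | hlt
      · exact le_rfl
      have : winStart n t i ≤ winStart n t j + 1 := by
        unfold winStart
        rw [← Nat.add_div_right _ (by omega)]
        exact Nat.div_le_div_right (by omega)
      omega
    exact Set.Ico_subset_Ico h3 h4
  eq_bot i hi := if_neg hi

lemma winStart_succ (n t i : ℕ) (h1 : 1 ≤ i) (h2 : i ≤ n) :
    winStart n (t + 1) i = if i = t % n + 1 then winStart n t i + 1 else winStart n t i := by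
  unfold winStart
  have hn : 0 < n := by omega
  have e1 : t + 1 + n - i = (t + n - i) + 1 := by omega
  rw [e1, Nat.succ_div]
  have hdm := Nat.div_add_mod t n
  have hlt := Nat.mod_lt t hn
  have key : n ∣ (t + n - i) + 1 ↔ i = t % n + 1 := by
    constructor
    · rintro ⟨c, hc⟩
      have h3 : n * (t / n) + t % n + n + 1 = n * c + i := by omega
      have h4 : c = t / n + 1 := by
        by_contra hne
        rcases Nat.lt_or_gt_of_ne hne with h | h
        · have : n * (c + 1) ≤ n * (t / n + 1) := Nat.mul_le_mul_left _ (by omega)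
          rw [Nat.mul_add, Nat.mul_add] at this
          omega
        · have : n * (t / n + 2) ≤ n * c := Nat.mul_le_mul_left _ (by omega)
          rw [Nat.mul_add] at this
          omega
      rw [h4, Nat.mul_add] at h3
      omega
    · intro h
      refine ⟨t / n + 1, ?_⟩
      rw [Nat.mul_add]
      omega
  by_cases h : i = t % n + 1
  · rw [if_pos (key.2 h), if_pos h]
  · rw [if_neg (fun h' => h (key.1 h')), if_neg h]; rfl

/-- Adjacency of chambers. -/
def Adj {B : V →ₗ[F] V →ₗ[F] F} {J : Finset ℕ} (s : ℕ) (C D : SFlag B J) : Prop :=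
  C ≠ D ∧ ∀ i, i ≠ s → C.space i = D.space i

lemma winFlag_adj {B : V →ₗ[F] V →ₗ[F] F} {n : ℕ} (hn : 1 ≤ n) {g : ℕ → V}
    (hg : GoodSeq B n g) (t : ℕ) :
    Adj (t % n + 1) (winFlag hg t) (winFlag hg (t + 1)) := by
  have hlt := Nat.mod_lt t hn
  constructor
  · intro h
    have h1 := congrArg (fun C => SFlag.space C (t % n + 1)) h
    have hmem : t % n + 1 ∈ Finset.Icc 1 n := Finset.mem_Icc.2 (by omega)
    simp only [winFlag, if_pos hmem] at h1
    rw [winStart_succ n t _ (by omega) (by omega), if_pos rfl] at h1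
    set k := winStart n t (t % n + 1)
    have h2 : g k ∈ Submodule.span F (g '' Set.Ico k (k + (t % n + 1))) :=
      Submodule.subset_span ⟨k, ⟨le_rfl, by omega⟩, rfl⟩
    rw [h1] at h2
    exact hg.2 k (goodSeq_span_perp hg k _ (by omega) _ h2)
  · intro i hi
    simp only [winFlag]
    split_ifs with h
    · have := Finset.mem_Icc.1 h
      rw [winStart_succ n t i this.1 this.2, if_neg hi]
    · rfl

end Frames

section Frames2

variable {F V : Type} [Field F] [AddCommGroup V] [Module F V] [FiniteDimensional F V]

lemma SFlag.ext' {B : V →ₗ[F] V →ₗ[F] F} {J : Finset ℕ} {C D : SFlag B J}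
    (h : ∀ i ∈ J, C.space i = D.space i) : C = D := by
  have h' : C.space = D.space := by
    funext i
    by_cases hi : i ∈ J
    · exact h i hi
    · rw [C.eq_bot i hi, D.eq_bot i hi]
  cases C
  cases D
  cases h'
  rfl

lemma SFlag.finrank' {B : V →ₗ[F] V →ₗ[F] F} {n : ℕ} (C : SFlag B (Finset.Icc 1 n)) {i : ℕ}
    (hi : i ≤ n) : finrank F (C.space i) = i := by
  by_cases h : i ∈ Finset.Icc 1 n
  · exact C.finrank_eq i h
  · rw [C.eq_bot i h, finrank_bot]
    rw [Finset.mem_Icc] at h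
    omega

lemma SFlag.iso' {B : V →ₗ[F] V →ₗ[F] F} {n : ℕ} (C : SFlag B (Finset.Icc 1 n)) (i : ℕ) :
    IsTotIso B (C.space i) := by
  by_cases h : i ∈ Finset.Icc 1 n
  · exact C.isotropic i h
  · rw [C.eq_bot i h]
    intro u hu w _
    rw [Submodule.mem_bot] at hu
    simp [hu]

lemma SFlag.mono' {B : V →ₗ[F] V →ₗ[F] F} {n : ℕ} (C : SFlag B (Finset.Icc 1 n)) {i j : ℕ}
    (hij : i ≤ j) (hj : j ≤ n) : C.space i ≤ C.space j := by
  by_cases h : i ∈ Finset.Icc 1 n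
  · exact C.mono i h j (Finset.mem_Icc.2 ⟨le_trans (Finset.mem_Icc.1 h).1 hij, hj⟩) hij
  · rw [C.eq_bot i h]
    exact bot_le

lemma eq_sup_span {S S' : Submodule F V} (hle : S ≤ S') (hr : finrank F S' = finrank F S + 1)
    {x : V} (hx : x ∈ S') (hx' : x ∉ S) : S' = S ⊔ Submodule.span F {x} := by
  symm
  have h1 : S ⊔ Submodule.span F {x} ≤ S' :=
    sup_le hle ((Submodule.span_singleton_le_iff_mem _ _).2 hx)
  apply Submodule.eq_of_le_of_finrank_le h1
  rw [hr]
  apply Submodule.finrank_lt_finrank_of_lt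
  refine lt_of_le_of_ne le_sup_left ?_
  intro h
  apply hx'
  rw [h]
  exact Submodule.mem_sup_right (Submodule.mem_span_singleton_self x)

lemma opp_symm {B : V →ₗ[F] V →ₗ[F] F} (hA : IsAltForm B) (hN : NondegForm B) {n : ℕ}
    {C D : SFlag B (Finset.Icc 1 n)} (h : FlagOpp C D) : FlagOpp D C := by
  intro i hi
  exact bperp_opp_symm hA hN (by rw [C.finrank_eq i hi, D.finrank_eq i hi]) (h i hi)

lemma opp_le {B : V →ₗ[F] V →ₗ[F] F} {n : ℕ}
    {C D : SFlag B (Finset.Icc 1 n)} (h : FlagOpp C D) (i : ℕ) :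
    bperp B (C.space i) ⊓ D.space i = ⊥ := by
  by_cases hi : i ∈ Finset.Icc 1 n
  · exact h i hi
  · rw [D.eq_bot i hi, inf_bot_eq]

lemma exists_half_frame {B : V →ₗ[F] V →ₗ[F] F} (hA : IsAltForm B) (hN : NondegForm B) {n : ℕ}
    (hd : finrank F V = 2 * n) {C D : SFlag B (Finset.Icc 1 n)} (h : FlagOpp C D) :
    ∃ e : ℕ → V, (∀ i < n, e i ∈ C.space (i + 1)) ∧ (∀ i < n, e i ∈ bperp B (D.space i)) ∧
      (∀ i < n, C.space (i + 1) = C.space i ⊔ Submodule.span F {e i}) ∧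
      (∀ i < n, e i ≠ 0) ∧ ∀ i ≤ n, C.space i = Submodule.span F (e '' Set.Iio i) := by
  have hex : ∀ i, ∃ x, i < n → x ∈ C.space (i + 1) ∧ x ∈ bperp B (D.space i) ∧ x ≠ 0 := by
    intro i
    by_cases hi : i < n
    · have h1 := finrank_bperp hA hN (D.space i)
      rw [D.finrank' hi.le] at h1
      obtain ⟨x, hx⟩ := exists_mem_inf_ne_zero (U := C.space (i + 1)) (W := bperp B (D.space i)) (by
        rw [C.finrank' (by omega : i + 1 ≤ n)]
        omega)
      exact ⟨x, fun _ => hx⟩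
    · exact ⟨0, fun h => absurd h hi⟩
  choose e he using hex
  have hsup : ∀ i < n, C.space (i + 1) = C.space i ⊔ Submodule.span F {e i} := by
    intro i hi
    apply eq_sup_span (C.mono' (by omega) (by omega))
    · rw [C.finrank' (by omega : i + 1 ≤ n), C.finrank' hi.le]
    · exact (he i hi).1
    · intro hmem
      have h1 := opp_le (opp_symm hA hN h) i
      have h2 : e i ∈ bperp B (D.space i) ⊓ C.space i := ⟨(he i hi).2.1, hmem⟩
      rw [h1, Submodule.mem_bot] at h2
      exact (he i hi).2.2 h2
  refine ⟨e, fun i hi => (he i hi).1, fun i hi => (he i hi).2.1, hsup,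
    fun i hi => (he i hi).2.2, ?_⟩
  intro i
  induction i with
  | zero =>
    intro _
    rw [C.eq_bot 0 (by simp)]
    simp
  | succ i ih =>
    intro hi
    rw [hsup i (by omega), ih (by omega)]
    have : Set.Iio (i + 1) = insert i (Set.Iio i) := by
      ext x
      simp only [Set.mem_Iio, Set.mem_insert_iff]
      omega
    rw [this, Set.image_insert_eq, Submodule.span_insert, sup_comm]

lemma exists_frame {B : V →ₗ[F] V →ₗ[F] F} (hA : IsAltForm B) (hN : NondegForm B) {n : ℕ}
    (hd : finrank F V = 2 * n) {C D : SFlag B (Finset.Icc 1 n)} (h : FlagOpp C D) :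
    ∃ e f : ℕ → V, (∀ i < n, ∀ j < n, B (e i) (e j) = 0) ∧ (∀ i < n, ∀ j < n, B (f i) (f j) = 0) ∧
      (∀ i < n, ∀ j < n, i ≠ j → B (e i) (f j) = 0) ∧ (∀ i < n, B (e i) (f i) ≠ 0) ∧
      (∀ i ≤ n, C.space i = Submodule.span F (e '' Set.Iio i)) ∧
      ∀ i ≤ n, D.space i = Submodule.span F (f '' Set.Iio i) := by
  obtain ⟨e, he1, he2, he3, he4, he5⟩ := exists_half_frame hA hN hd h
  obtain ⟨f, hf1, hf2, hf3, hf4, hf5⟩ := exists_half_frame hA hN hd (opp_symm hA hN h)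
  refine ⟨e, f, ?_, ?_, ?_, ?_, he5, hf5⟩
  · intro i hi j hj
    exact C.iso' n _ (C.mono' (by omega) le_rfl (he1 i hi)) _
      (C.mono' (by omega) le_rfl (he1 j hj))
  · intro i hi j hj
    exact D.iso' n _ (D.mono' (by omega) le_rfl (hf1 i hi)) _
      (D.mono' (by omega) le_rfl (hf1 j hj))
  · intro i hi j hj hij
    rcases Nat.lt_or_gt_of_ne hij with hlt | hlt
    · exact mem_bperp.1 (hf2 j hj) _ (C.mono' (by omega) (by omega) (he1 i hi))
    · exact alt_refl hA (mem_bperp.1 (he2 i hi) _ (D.mono' (by omega) (by omega) (hf1 j hj)))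
  · intro i hi h0
    have h1 := opp_le h (i + 1)
    have h2 : f i ∈ bperp B (C.space (i + 1)) ⊓ D.space (i + 1) := by
      refine ⟨?_, hf1 i hi⟩
      show f i ∈ bperp B (C.space (i + 1))
      rw [mem_bperp, he3 i hi]
      intro w hw
      obtain ⟨y, hy, z, hz, rfl⟩ := Submodule.mem_sup.1 hw
      obtain ⟨a, rfl⟩ := Submodule.mem_span_singleton.1 hz
      simp [h0, mem_bperp.1 (hf2 i hi) y hy]
    rw [h1, Submodule.mem_bot] at h2
    exact hf4 i hi h2

/-- The cyclic reordering used to start a gallery at time `r`. -/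
def cyc (r x : ℕ) : ℕ := if x = 0 then r else if x ≤ r then x - 1 else x

lemma cyc_lt {n r x : ℕ} (hr : r < n) (hx : x < n) : cyc r x < n := by
  unfold cyc; split_ifs <;> omega

lemma cyc_inj {r x y : ℕ} (h : cyc r x = cyc r y) : x = y := by
  unfold cyc at h; split_ifs at h <;> omega

lemma eq_of_mod_eq {n x y : ℕ} (h : x % n = y % n) (h1 : x < y + n) (h2 : y < x + n) : x = y := by
  have hx := Nat.div_add_mod x n
  have hy := Nat.div_add_mod y n
  have : x / n = y / n := by
    by_contra hne
    rcases Nat.lt_or_gt_of_ne hne with h' | h'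
    · have : n * (x / n + 1) ≤ n * (y / n) := Nat.mul_le_mul_left _ h'
      rw [Nat.mul_add] at this
      omega
    · have : n * (y / n + 1) ≤ n * (x / n) := Nat.mul_le_mul_left _ h'
      rw [Nat.mul_add] at this
      omega
  rw [this] at hx
  omega

lemma cyc_image {n r i : ℕ} (hr : r < n) (h1 : 1 ≤ i) (h2 : i ≤ n) :
    cyc r '' Set.Ico (winStart n r i) (winStart n r i + i) = Set.Iio i := by
  have hw : winStart n r i = if i ≤ r then 1 else 0 := by
    unfold winStart
    split_ifs with h
    · exact Nat.div_eq_of_lt_le (by omega) (by omega)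
    · exact Nat.div_eq_of_lt (by omega)
  rw [hw]
  ext y
  simp only [Set.mem_image, Set.mem_Ico, Set.mem_Iio]
  constructor
  · rintro ⟨x, hx, rfl⟩
    unfold cyc
    split_ifs at * <;> omega
  · intro hy
    by_cases h : i ≤ r
    · simp only [if_pos h]
      exact ⟨y + 1, by omega, by rw [cyc, if_neg (by omega), if_pos (by omega)]; omega⟩
    · simp only [if_neg h]
      rcases lt_trichotomy y r with h3 | h3 | h3
      · exact ⟨y + 1, by omega, by rw [cyc, if_neg (by omega), if_pos (by omega)]; omega⟩
      · exact ⟨0, by omega, by rw [h3]; simp [cyc]⟩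
      · exact ⟨y, by omega, by unfold cyc; split_ifs <;> omega⟩

lemma winStart_lt {n r i x : ℕ} (hr : r < n) (h1 : 1 ≤ i) (h2 : i ≤ n)
    (hx : x < winStart n r i + i) : x < n := by
  have hw : winStart n r i = if i ≤ r then 1 else 0 := by
    unfold winStart
    split_ifs with h
    · exact Nat.div_eq_of_lt_le (by omega) (by omega)
    · exact Nat.div_eq_of_lt (by omega)
  rw [hw] at hx
  split_ifs at hx <;> omega

lemma exists_gallery {B : V →ₗ[F] V →ₗ[F] F} (hA : IsAltForm B) (hN : NondegForm B) {n : ℕ}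
    (hd : finrank F V = 2 * n) {C D : SFlag B (Finset.Icc 1 n)} (h : FlagOpp C D)
    (r : ℕ) (hr : r < n) :
    ∃ (g : ℕ → V) (hg : GoodSeq B n g), winFlag hg r = C ∧ winFlag hg (r + n * n) = D := by
  obtain ⟨e, f, hee, hff, hef, hef', hC, hD⟩ := exists_frame hA hN hd h
  have hn : 0 < n := by omega
  let g : ℕ → V := fun x => if (x / n) % 2 = 0 then e (cyc r (x % n)) else f (cyc r (x % n))
  have hlt : ∀ x, cyc r (x % n) < n := fun x => cyc_lt hr (Nat.mod_lt _ hn)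
  have hg : GoodSeq B n g := by
    constructor
    · intro x y h1 h2
      simp only [g]
      by_cases hxy : x % n = y % n
      · rw [eq_of_mod_eq hxy h1 h2]
        exact hA _
      · have hne : cyc r (x % n) ≠ cyc r (y % n) := fun h' => hxy (cyc_inj h')
        split_ifs
        · exact hee _ (hlt x) _ (hlt y)
        · exact hef _ (hlt x) _ (hlt y) hne
        · exact alt_refl hA (hef _ (hlt y) _ (hlt x) hne.symm)
        · exact hff _ (hlt x) _ (hlt y)
    · intro x
      simp only [g]
      rw [Nat.add_mod_right, Nat.add_div_right _ hn]
      by_cases h0 : (x / n) % 2 = 0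
      · have h1 : ¬ (x / n).succ % 2 = 0 := by omega
        rw [if_pos h0, if_neg h1]
        exact hef' _ (hlt x)
      · have h1 : (x / n).succ % 2 = 0 := by omega
        rw [if_neg h0, if_pos h1]
        exact fun h' => hef' _ (hlt x) (alt_refl hA h')
  have hg1 : ∀ x < n, g x = e (cyc r x) := by
    intro x hx
    simp only [g]
    rw [Nat.div_eq_of_lt hx, Nat.mod_eq_of_lt hx]
    simp
  have hg2 : ∀ x < n, g (x + n) = f (cyc r x) := by
    intro x hx
    simp only [g]
    rw [Nat.add_div_right _ hn, Nat.add_mod_right, Nat.div_eq_of_lt hx, Nat.mod_eq_of_lt hx]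
    simp
  refine ⟨g, hg, ?_, ?_⟩
  · apply SFlag.ext'
    intro i hi
    have hi' := Finset.mem_Icc.1 hi
    simp only [winFlag, if_pos hi]
    rw [hC i hi'.2, ← cyc_image hr hi'.1 hi'.2, Set.image_image]
    congr 1
    apply Set.image_congr
    intro x hx
    exact hg1 x (winStart_lt hr hi'.1 hi'.2 hx.2)
  · apply SFlag.ext'
    intro i hi
    have hi' := Finset.mem_Icc.1 hi
    simp only [winFlag, if_pos hi]
    have hw : winStart n (r + n * n) i = winStart n r i + n := by
      unfold winStart
      rw [← Nat.add_mul_div_left _ n hn]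
      congr 1
      omega
    rw [hD i hi'.2, ← cyc_image hr hi'.1 hi'.2, Set.image_image, hw]
    congr 1
    ext y
    simp only [Set.mem_image, Set.mem_Ico]
    constructor
    · rintro ⟨x, hx, rfl⟩
      refine ⟨x - n, by omega, ?_⟩
      rw [← hg2 (x - n) (winStart_lt hr hi'.1 hi'.2 (by omega))]
      congr 1
      omega
    · rintro ⟨x, hx, rfl⟩
      refine ⟨x + n, by omega, ?_⟩
      rw [hg2 x (winStart_lt hr hi'.1 hi'.2 hx.2)]

end Frames2

/-! ### Counting -/

section Counting

lemma natCard_fiber_le {α β : Type} [Finite α] [Finite β] (f : α → β) (c : ℕ)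
    (h : ∀ b, Nat.card {a // f a = b} ≤ c) : Nat.card α ≤ Nat.card β * c := by
  have := Fintype.ofFinite β
  rw [← Nat.card_congr (Equiv.sigmaFiberEquiv f), Nat.card_sigma, Nat.card_eq_fintype_card]
  calc _ ≤ ∑ _b : β, c := Finset.sum_le_sum fun b _ => h b
    _ = _ := by simp

lemma le_natCard_fiber {α β : Type} [Finite α] [Finite β] (f : α → β) (c : ℕ)
    (h : ∀ b, c ≤ Nat.card {a // f a = b}) : Nat.card β * c ≤ Nat.card α := by
  have := Fintype.ofFinite β
  rw [← Nat.card_congr (Equiv.sigmaFiberEquiv f), Nat.card_sigma, Nat.card_eq_fintype_card]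
  calc _ = ∑ _b : β, c := by simp
    _ ≤ _ := Finset.sum_le_sum fun b _ => h b

variable {F V : Type} [Field F] [Fintype F] [AddCommGroup V] [Module F V] [FiniteDimensional F V]

lemma finite_of_fd (F V : Type) [Field F] [Fintype F] [AddCommGroup V] [Module F V]
    [FiniteDimensional F V] : Finite V := Module.finite_of_finite F

lemma natCard_sub (W : Submodule F V) : Nat.card W = Fintype.card F ^ finrank F W := by
  rw [Module.natCard_eq_pow_finrank (K := F), Nat.card_eq_fintype_card]

lemma count_mid {L U : Submodule F V} (hLU : L ≤ U) :
    Nat.card {X : Submodule F V // L ≤ X ∧ X ≤ U ∧ finrank F X = finrank F L + 1} *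
      (Fintype.card F ^ (finrank F L + 1) - Fintype.card F ^ finrank F L) =
      Fintype.card F ^ finrank F U - Fintype.card F ^ finrank F L := by
  have : Finite V := finite_of_fd F V
  have : Fintype V := Fintype.ofFinite V
  have : Fintype (Submodule F V) := Fintype.ofFinite _
  have hdiff : ∀ X : Submodule F V, L ≤ X →
      (Finset.univ.filter (fun v : V => v ∈ X ∧ v ∉ L)).card =
        Fintype.card F ^ finrank F X - Fintype.card F ^ finrank F L := by
    intro X hX
    have h1 : Finset.univ.filter (fun v : V => v ∈ X ∧ v ∉ L) =
        Finset.univ.filter (fun v : V => v ∈ X) \ Finset.univ.filter (fun v : V => v ∈ L) := by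
      ext v; simp
    have h2 : ∀ Y : Submodule F V, (Finset.univ.filter (fun v : V => v ∈ Y)).card =
        Fintype.card F ^ finrank F Y := by
      intro Y
      rw [← natCard_sub, Nat.card_eq_fintype_card, Fintype.card_subtype]
    rw [h1, Finset.card_sdiff_of_subset, h2, h2]
    intro v hv
    simp only [Finset.mem_filter, Finset.mem_univ, true_and] at hv ⊢
    exact hX hv
  rw [Nat.card_eq_fintype_card, Fintype.card_subtype, ← hdiff U hLU]
  rw [Finset.card_eq_sum_card_fiberwise (f := fun v => L ⊔ Submodule.span F {v})
    (t := Finset.univ.filter (fun X : Submodule F V =>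
      L ≤ X ∧ X ≤ U ∧ finrank F X = finrank F L + 1))]
  · rw [Finset.sum_const_nat (m := Fintype.card F ^ (finrank F L + 1) -
      Fintype.card F ^ finrank F L)]
    intro X hX
    simp only [Finset.mem_filter, Finset.mem_univ, true_and] at hX
    rw [← hX.2.2, ← hdiff X hX.1]
    congr 1
    ext v
    simp only [Finset.mem_filter, Finset.mem_univ, true_and]
    constructor
    · rintro ⟨⟨_, h2⟩, h3⟩
      refine ⟨?_, h2⟩
      rw [← h3]
      exact Submodule.mem_sup_right (Submodule.mem_span_singleton_self v)
    · rintro ⟨h1, h2⟩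
      exact ⟨⟨hX.2.1 h1, h2⟩, (eq_sup_span hX.1 hX.2.2 h1 h2).symm⟩
  · intro v hv
    simp only [Finset.coe_filter, Finset.mem_univ, true_and, Set.mem_ofPred_eq] at hv ⊢
    refine ⟨le_sup_left, sup_le hLU ((Submodule.span_singleton_le_iff_mem _ _).2 hv.1), ?_⟩
    have hne : v ≠ 0 := by
      rintro rfl
      exact hv.2 L.zero_mem
    have h2 := Submodule.finrank_sup_add_finrank_inf_eq L (Submodule.span F {v})
    have h3 : L ⊓ Submodule.span F {v} = ⊥ := by
      rw [← disjoint_iff, Submodule.disjoint_span_singleton' hne]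
      exact hv.2
    rw [h3, finrank_bot, finrank_span_singleton hne] at h2
    omega

instance instFiniteSFlag (B : V →ₗ[F] V →ₗ[F] F) (J : Finset ℕ) : Finite (SFlag B J) := by
  have : Finite V := finite_of_fd F V
  apply Finite.of_injective (fun (C : SFlag B J) (i : J) => C.space i)
  intro C D h
  apply SFlag.ext'
  intro i hi
  exact congrFun h ⟨i, hi⟩

lemma isTotIso_sup_span {B : V →ₗ[F] V →ₗ[F] F} (hA : IsAltForm B) {W : Submodule F V}
    (hW : IsTotIso B W) {v : V} (hv : v ∈ bperp B W) :
    IsTotIso B (W ⊔ Submodule.span F {v}) := by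
  intro x hx y hy
  obtain ⟨x1, hx1, x2, hx2, rfl⟩ := Submodule.mem_sup.1 hx
  obtain ⟨y1, hy1, y2, hy2, rfl⟩ := Submodule.mem_sup.1 hy
  obtain ⟨a, rfl⟩ := Submodule.mem_span_singleton.1 hx2
  obtain ⟨b, rfl⟩ := Submodule.mem_span_singleton.1 hy2
  have h1 := mem_bperp.1 hv x1 hx1
  have h2 := alt_refl hA (mem_bperp.1 hv y1 hy1)
  simp [hW x1 hx1 y1 hy1, h1, h2, hA v]

lemma le_bperp_of_iso {B : V →ₗ[F] V →ₗ[F] F} {W X : Submodule F V} (hX : IsTotIso B X)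
    (hW : W ≤ X) : X ≤ bperp B W := by
  intro x hx
  rw [mem_bperp]
  exact fun w hw => hX w (hW hw) x hx

/-- Restriction of a flag to its first `m` members. -/
def SFlag.res {B : V →ₗ[F] V →ₗ[F] F} {m : ℕ} (C : SFlag B (Finset.Icc 1 (m + 1))) :
    SFlag B (Finset.Icc 1 m) where
  space i := if i ∈ Finset.Icc 1 m then C.space i else ⊥
  isotropic i hi := by
    rw [if_pos hi]
    exact C.iso' i
  finrank_eq i hi := by
    rw [if_pos hi]
    have := Finset.mem_Icc.1 hi
    exact C.finrank' (by omega)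
  mono i hi j hj hij := by
    rw [if_pos hi, if_pos hj]
    have := Finset.mem_Icc.1 hj
    exact C.mono' hij (by omega)
  eq_bot i hi := if_neg hi

lemma SFlag.res_space {B : V →ₗ[F] V →ₗ[F] F} {m : ℕ} (C : SFlag B (Finset.Icc 1 (m + 1)))
    {i : ℕ} (hi : i ≤ m) : C.res.space i = C.space i := by
  show (if i ∈ Finset.Icc 1 m then C.space i else ⊥) = C.space i
  split_ifs with h
  · rfl
  · rw [C.eq_bot i]
    rw [Finset.mem_Icc] at h ⊢
    omega

/-- Extension of a flag by one more subspace. -/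
def SFlag.extend {B : V →ₗ[F] V →ₗ[F] F} {m : ℕ} (C : SFlag B (Finset.Icc 1 m))
    (X : Submodule F V) (h1 : C.space m ≤ X) (h2 : IsTotIso B X) (h3 : finrank F X = m + 1) :
    SFlag B (Finset.Icc 1 (m + 1)) where
  space i := if i = m + 1 then X else C.space i
  isotropic i _ := by
    split_ifs
    · exact h2
    · exact C.iso' i
  finrank_eq i hi := by
    have := Finset.mem_Icc.1 hi
    by_cases h : i = m + 1
    · rw [if_pos h, h3, h]
    · rw [if_neg h]
      exact C.finrank' (by omega)
  mono i hi j hj hij := by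
    have := Finset.mem_Icc.1 hi
    have := Finset.mem_Icc.1 hj
    by_cases hj' : j = m + 1
    · rw [if_pos hj']
      split_ifs with h
      · exact le_rfl
      · exact (C.mono' (by omega) le_rfl).trans h1
    · rw [if_neg hj', if_neg (by omega)]
      exact C.mono' hij (by omega)
  eq_bot i hi := by
    rw [Finset.mem_Icc] at hi
    rw [if_neg (by omega), C.eq_bot]
    rw [Finset.mem_Icc]
    omega

lemma SFlag.eq_of_res {B : V →ₗ[F] V →ₗ[F] F} {m : ℕ} {C D : SFlag B (Finset.Icc 1 (m + 1))}
    (h : C.res = D.res) (h' : C.space (m + 1) = D.space (m + 1)) : C = D := by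
  apply SFlag.ext'
  intro i hi
  have := Finset.mem_Icc.1 hi
  by_cases him : i = m + 1
  · rw [him, h']
  · rw [← C.res_space (by omega), ← D.res_space (by omega), h]

lemma SFlag.res_extend {B : V →ₗ[F] V →ₗ[F] F} {m : ℕ} (C : SFlag B (Finset.Icc 1 m))
    (X : Submodule F V) (h1 : C.space m ≤ X) (h2 : IsTotIso B X) (h3 : finrank F X = m + 1) :
    (C.extend X h1 h2 h3).res = C := by
  apply SFlag.ext'
  intro i hi
  have := Finset.mem_Icc.1 hi
  rw [SFlag.res_space _ (by omega)]
  exact if_neg (by omega)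

lemma one_lt_cardF : 1 < Fintype.card F := Fintype.one_lt_card

lemma card_flags_step {B : V →ₗ[F] V →ₗ[F] F} (hA : IsAltForm B) (hN : NondegForm B) {n : ℕ}
    (hd : finrank F V = 2 * n) (m : ℕ) (hm : m < n) :
    Nat.card (SFlag B (Finset.Icc 1 (m + 1))) * (Fintype.card F - 1) ≤
      Nat.card (SFlag B (Finset.Icc 1 m)) * Fintype.card F ^ (2 * n - 2 * m) := by
  have : Finite V := finite_of_fd F V
  have hq : 1 < Fintype.card F := one_lt_cardF
  set q := Fintype.card F with hqdef
  set c := q ^ (2 * n - 2 * m) / (q - 1) with hc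
  have h1 := natCard_fiber_le (SFlag.res (B := B) (m := m)) c (by
    intro D
    have hle : D.space m ≤ bperp B (D.space m) := le_bperp_of_iso (D.iso' m) le_rfl
    have hcm := count_mid hle
    have hb := finrank_bperp hA hN (D.space m)
    rw [D.finrank' le_rfl] at hcm hb
    have hinj : Nat.card {a : SFlag B (Finset.Icc 1 (m + 1)) // a.res = D} ≤
        Nat.card {X : Submodule F V // D.space m ≤ X ∧ X ≤ bperp B (D.space m) ∧
          finrank F X = m + 1} := by
      apply Nat.card_le_card_of_injective (fun a => ⟨a.1.space (m + 1), by
        have hres : D.space m = a.1.space m := by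
          have := a.1.res_space (le_refl m)
          rw [a.2] at this
          exact this
        have hle' : a.1.space m ≤ a.1.space (m + 1) := a.1.mono' (by omega) le_rfl
        rw [hres]
        exact ⟨hle', le_bperp_of_iso (a.1.iso' _) hle', a.1.finrank' le_rfl⟩⟩)
      intro a b hab
      apply Subtype.ext
      exact SFlag.eq_of_res (a.2.trans b.2.symm) (congrArg Subtype.val hab)
    refine hinj.trans ?_
    rw [hc, Nat.le_div_iff_mul_le (by omega)]
    have hpos : 0 < q ^ m := by positivity
    apply Nat.le_of_mul_le_mul_right _ hpos
    rw [mul_assoc, ← pow_add, show 2 * n - 2 * m + m = finrank F (bperp B (D.space m)) by omega,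
      Nat.sub_mul, one_mul, ← pow_succ', hcm]
    exact Nat.sub_le _ _)
  calc _ ≤ Nat.card (SFlag B (Finset.Icc 1 m)) * c * (q - 1) := Nat.mul_le_mul_right _ h1
    _ ≤ _ := by
      rw [mul_assoc]
      exact Nat.mul_le_mul_left _ (Nat.div_mul_le_self _ _)

lemma card_flags_le {B : V →ₗ[F] V →ₗ[F] F} (hA : IsAltForm B) (hN : NondegForm B) {n : ℕ}
    (hd : finrank F V = 2 * n) (m : ℕ) (hm : m ≤ n) :
    Nat.card (SFlag B (Finset.Icc 1 m)) * (Fintype.card F - 1) ^ m * Fintype.card F ^ (m * m) ≤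
      Fintype.card F ^ (m * (2 * n + 1)) := by
  induction m with
  | zero =>
    have : Nat.card (SFlag B (Finset.Icc 1 0)) ≤ 1 := by
      rw [Finite.card_le_one_iff_subsingleton]
      exact ⟨fun C D => SFlag.ext' (by intro i hi; simp at hi)⟩
    simpa using this
  | succ m ih =>
    have h1 := card_flags_step hA hN hd m (by omega)
    have h2 := ih (by omega)
    set q := Fintype.card F
    set N := Nat.card (SFlag B (Finset.Icc 1 m))
    set N' := Nat.card (SFlag B (Finset.Icc 1 (m + 1)))
    calc N' * (q - 1) ^ (m + 1) * q ^ ((m + 1) * (m + 1))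
        = (N' * (q - 1)) * ((q - 1) ^ m * q ^ ((m + 1) * (m + 1))) := by ring
      _ ≤ (N * q ^ (2 * n - 2 * m)) * ((q - 1) ^ m * q ^ ((m + 1) * (m + 1))) :=
        Nat.mul_le_mul_right _ h1
      _ = (N * (q - 1) ^ m) * q ^ (2 * n - 2 * m + (m + 1) * (m + 1)) := by ring
      _ = (N * (q - 1) ^ m) * q ^ (m * m + (2 * n + 1)) := by
        congr 2
        have : (m + 1) * (m + 1) = m * m + 2 * m + 1 := by ring
        omega
      _ = (N * (q - 1) ^ m * q ^ (m * m)) * q ^ (2 * n + 1) := by ring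
      _ ≤ q ^ (m * (2 * n + 1)) * q ^ (2 * n + 1) := Nat.mul_le_mul_right _ h2
      _ = q ^ ((m + 1) * (2 * n + 1)) := by ring

end Counting

/-! ### Counting opposite chambers -/

section OppCounting

variable {F V : Type} [Field F] [Fintype F] [AddCommGroup V] [Module F V] [FiniteDimensional F V]

lemma ext_data {B : V →ₗ[F] V →ₗ[F] F} (hA : IsAltForm B) (hN : NondegForm B) {n m : ℕ}
    (hd : finrank F V = 2 * n) {C C' D : Submodule F V} (hC : finrank F C = m)
    (hC' : finrank F C' = m + 1) (hD : finrank F D = m) (hCC : C ≤ C') (hiC : IsTotIso B C')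
    (hopp : bperp B C ⊓ D = ⊥) :
    ∃ (e v : V) (K : Submodule F V), e ∈ C' ∧ e ∈ bperp B D ∧ B e v = 1 ∧ v ∈ bperp B (C ⊔ D) ∧
      K ≤ bperp B (C ⊔ D) ∧ (∀ k ∈ K, B e k = 0) ∧ 2 * n - 2 * m - 1 ≤ finrank F K := by
  have hbD := finrank_bperp hA hN D
  obtain ⟨e, heC, heD, he0⟩ := exists_mem_inf_ne_zero (U := C') (W := bperp B D) (by omega)
  have hex : ∃ u ∈ bperp B (C ⊔ D), B e u ≠ 0 := by
    by_contra hcon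
    push Not at hcon
    have h1 : e ∈ bperp B (bperp B (C ⊔ D)) := by
      rw [mem_bperp]
      exact fun w hw => alt_refl hA (hcon w hw)
    rw [bperp_bperp hA hN] at h1
    obtain ⟨c, hc, d, hdd, hcd⟩ := Submodule.mem_sup.1 h1
    have hde : d = e - c := by rw [← hcd]; simp
    have hd0 : d ∈ bperp B C ⊓ D := by
      refine ⟨?_, hdd⟩
      have : d ∈ C' := by rw [hde]; exact C'.sub_mem heC (hCC hc)
      exact le_bperp_of_iso hiC hCC this
    rw [hopp, Submodule.mem_bot] at hd0
    rw [hd0, add_zero] at hcd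
    have h2 : e ∈ bperp B D ⊓ C := ⟨heD, hcd ▸ hc⟩
    rw [bperp_opp_symm hA hN (hC.trans hD.symm) hopp, Submodule.mem_bot] at h2
    exact he0 h2
  obtain ⟨u, hu, hu'⟩ := hex
  refine ⟨e, (B e u)⁻¹ • u, bperp B (C ⊔ D) ⊓ LinearMap.ker (B e), heC, heD, ?_,
    Submodule.smul_mem _ _ hu, inf_le_left, fun k hk => hk.2, ?_⟩
  · rw [map_smul, smul_eq_mul, inv_mul_cancel₀ hu']
  · have h1 := finrank_bperp hA hN (C ⊔ D)
    have h2 := Submodule.finrank_add_le_finrank_add_finrank C D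
    have h3 := Submodule.finrank_sup_add_finrank_inf_eq (bperp B (C ⊔ D)) (LinearMap.ker (B e))
    have h4 := Submodule.finrank_le (bperp B (C ⊔ D) ⊔ LinearMap.ker (B e))
    have h5 := LinearMap.finrank_range_add_finrank_ker (B e)
    have h6 := Submodule.finrank_le (LinearMap.range (B e))
    rw [Module.finrank_self] at h6
    omega

/-- Flags of type `[m]` opposite to the first part of a chamber. -/
def OppTo {B : V →ₗ[F] V →ₗ[F] F} {n : ℕ} (C : SFlag B (Finset.Icc 1 n)) (m : ℕ) : Type :=
  {D : SFlag B (Finset.Icc 1 m) // ∀ i ∈ Finset.Icc 1 m, bperp B (C.space i) ⊓ D.space i = ⊥}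

instance {B : V →ₗ[F] V →ₗ[F] F} {n : ℕ} (C : SFlag B (Finset.Icc 1 n)) (m : ℕ) :
    Finite (OppTo C m) := by unfold OppTo; infer_instance

/-- Restriction map on flags opposite to a chamber. -/
def OppTo.res {B : V →ₗ[F] V →ₗ[F] F} {n : ℕ} {C : SFlag B (Finset.Icc 1 n)} {m : ℕ}
    (D : OppTo C (m + 1)) : OppTo C m :=
  ⟨D.1.res, by
    intro i hi
    have := Finset.mem_Icc.1 hi
    rw [D.1.res_space (by omega)]
    exact D.2 i (Finset.mem_Icc.2 (by omega))⟩

lemma card_opp_step {B : V →ₗ[F] V →ₗ[F] F} (hA : IsAltForm B) (hN : NondegForm B) {n : ℕ}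
    (hd : finrank F V = 2 * n) (C : SFlag B (Finset.Icc 1 n)) (m : ℕ) (hm : m < n) :
    Nat.card (OppTo C m) * Fintype.card F ^ (2 * n - 2 * m - 1) ≤ Nat.card (OppTo C (m + 1)) := by
  apply le_natCard_fiber OppTo.res
  rintro ⟨D, hD⟩
  have hopp : bperp B (C.space m) ⊓ D.space m = ⊥ := by
    by_cases h : m ∈ Finset.Icc 1 m
    · exact hD m h
    · rw [D.eq_bot m h, inf_bot_eq]
  obtain ⟨e, v, K, heC, heD, hev, hv, hKU, hKe, hK⟩ := ext_data hA hN hd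
    (C.finrank' hm.le) (C.finrank' (Nat.succ_le_of_lt hm)) (D.finrank' le_rfl)
    (C.mono' (Nat.le_succ m) hm) (C.iso' _) hopp
  have heD' : ∀ d ∈ D.space m, B e d = 0 := fun d h => alt_refl hA (mem_bperp.1 heD d h)
  have hC0 : ∀ d ∈ D.space m, d ∈ bperp B (C.space m) → d = 0 := by
    intro d h1 h2
    have : d ∈ bperp B (C.space m) ⊓ D.space m := ⟨h2, h1⟩
    rwa [hopp, Submodule.mem_bot] at this
  have hev' : ∀ k ∈ K, B e (v + k) = 1 := by
    intro k hk
    rw [map_add, hev, hKe k hk, add_zero]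
  have hnot : ∀ k ∈ K, v + k ∉ D.space m := by
    intro k hk h
    have := heD' _ h
    rw [hev' k hk] at this
    exact one_ne_zero this
  have hUD : ∀ u ∈ bperp B (C.space m ⊔ D.space m), u ∈ bperp B (D.space m) := fun u hu =>
    bperp_anti B le_sup_right hu
  have hUC : ∀ u ∈ bperp B (C.space m ⊔ D.space m), u ∈ bperp B (C.space m) := fun u hu =>
    bperp_anti B le_sup_left hu
  have hfr : ∀ k ∈ K, finrank F (D.space m ⊔ Submodule.span F {v + k} : Submodule F V) = m + 1 := by
    intro k hk
    have hne : v + k ≠ 0 := fun h => hnot k hk (h ▸ Submodule.zero_mem _)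
    have h2 := Submodule.finrank_sup_add_finrank_inf_eq (D.space m) (Submodule.span F {v + k})
    have h3 : D.space m ⊓ Submodule.span F {v + k} = ⊥ := by
      rw [← disjoint_iff, Submodule.disjoint_span_singleton' hne]
      exact hnot k hk
    rw [h3, finrank_bot, finrank_span_singleton hne, D.finrank' le_rfl] at h2
    omega
  have hmem : ∀ k ∈ K, v + k ∈ bperp B (C.space m ⊔ D.space m) := fun k hk =>
    Submodule.add_mem _ hv (hKU hk)
  let Φ : K → {a : OppTo C (m + 1) // a.res = ⟨D, hD⟩} := fun k =>
    ⟨⟨D.extend (D.space m ⊔ Submodule.span F {v + k.1}) le_sup_left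
      (isTotIso_sup_span hA (D.iso' m) (hUD _ (hmem k k.2))) (hfr k k.2), by
        intro i hi
        have hi' := Finset.mem_Icc.1 hi
        show bperp B (C.space i) ⊓ (if i = m + 1 then _ else D.space i) = ⊥
        by_cases him : i = m + 1
        · rw [if_pos him, him, eq_bot_iff]
          rintro x ⟨hx1, hx2⟩
          obtain ⟨d, hd1, y, hy, rfl⟩ := Submodule.mem_sup.1 hx2
          obtain ⟨a, rfl⟩ := Submodule.mem_span_singleton.1 hy
          have h1 := mem_bperp.1 hx1 e heC
          rw [map_add, map_smul, heD' d hd1, hev' k k.2, zero_add, smul_eq_mul, mul_one] at h1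
          subst h1
          rw [zero_smul, add_zero] at hx1 ⊢
          rw [Submodule.mem_bot]
          exact hC0 d hd1 (bperp_anti B (C.mono' (Nat.le_succ m) hm) hx1)
        · rw [if_neg him]
          exact hD i (Finset.mem_Icc.2 (by omega))⟩,
      Subtype.ext (SFlag.res_extend D (D.space m ⊔ Submodule.span F {v + k.1}) le_sup_left
        (isTotIso_sup_span hA (D.iso' m) (hUD _ (hmem k k.2))) (hfr k k.2))⟩
  have hΦ : Function.Injective Φ := by
    intro k k' hkk
    have h0 := congrArg (fun a => a.1.1.space (m + 1)) hkk
    have h1 : D.space m ⊔ Submodule.span F {v + k.1} = D.space m ⊔ Submodule.span F {v + k'.1} := by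
      simpa [Φ, SFlag.extend] using h0
    have h2 : v + k.1 ∈ D.space m ⊔ Submodule.span F {v + k'.1} := by
      rw [← h1]
      exact Submodule.mem_sup_right (Submodule.mem_span_singleton_self _)
    obtain ⟨d, hd1, y, hy, h3⟩ := Submodule.mem_sup.1 h2
    obtain ⟨a, rfl⟩ := Submodule.mem_span_singleton.1 hy
    have h4 := congrArg (B e) h3
    rw [map_add, map_smul, heD' d hd1, hev' k k.2, hev' k' k'.2, zero_add, smul_eq_mul,
      mul_one] at h4
    subst h4
    rw [one_smul] at h3
    have h5 : d = k.1 - k'.1 := by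
      have : d = (v + k.1) - (v + k'.1) := by rw [← h3]; simp
      rw [this]; abel
    have h6 : d = 0 := hC0 d hd1 (by
      rw [h5]
      exact Submodule.sub_mem _ (hUC _ (hKU k.2)) (hUC _ (hKU k'.2)))
    rw [h6] at h5
    exact Subtype.ext (sub_eq_zero.1 h5.symm)
  calc Fintype.card F ^ (2 * n - 2 * m - 1) ≤ Fintype.card F ^ finrank F K :=
        Nat.pow_le_pow_right Fintype.card_pos hK
    _ = Nat.card K := (natCard_sub K).symm
    _ ≤ _ := Nat.card_le_card_of_injective Φ hΦ

lemma card_opp_ge {B : V →ₗ[F] V →ₗ[F] F} (hA : IsAltForm B) (hN : NondegForm B) {n : ℕ}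
    (hd : finrank F V = 2 * n) (C : SFlag B (Finset.Icc 1 n)) :
    Fintype.card F ^ (n * n) ≤ Nat.card {D // FlagOpp C D} := by
  have key : ∀ m ≤ n, Fintype.card F ^ (2 * n * m) ≤
      Nat.card (OppTo C m) * Fintype.card F ^ (m * m) := by
    intro m
    induction m with
    | zero =>
      intro _
      have : Nonempty (OppTo C 0) := ⟨⟨⟨fun _ => ⊥, by simp, by simp, by simp, by simp⟩, by simp⟩⟩
      have h1 : 1 ≤ Nat.card (OppTo C 0) := Nat.succ_le_of_lt Nat.card_pos
      simpa using h1
    | succ m ih =>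
      intro hm
      have h1 := card_opp_step hA hN hd C m (by omega)
      have h2 := ih (by omega)
      set q := Fintype.card F
      calc q ^ (2 * n * (m + 1)) = q ^ (2 * n * m) * q ^ (2 * n) := by ring
        _ ≤ (Nat.card (OppTo C m) * q ^ (m * m)) * q ^ (2 * n) := Nat.mul_le_mul_right _ h2
        _ = Nat.card (OppTo C m) * q ^ (m * m + 2 * n) := by ring
        _ = Nat.card (OppTo C m) * q ^ ((2 * n - 2 * m - 1) + (m + 1) * (m + 1)) := by
          congr 2
          have : (m + 1) * (m + 1) = m * m + 2 * m + 1 := by ring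
          omega
        _ = (Nat.card (OppTo C m) * q ^ (2 * n - 2 * m - 1)) * q ^ ((m + 1) * (m + 1)) := by ring
        _ ≤ _ := Nat.mul_le_mul_right _ h1
  have h := key n le_rfl
  have hpos : 0 < Fintype.card F ^ (n * n) := pow_pos Fintype.card_pos _
  apply Nat.le_of_mul_le_mul_right _ hpos
  calc _ = Fintype.card F ^ (2 * n * n) := by ring
    _ ≤ _ := h

end OppCounting

/-! ### Panels -/

section Panels

variable {F V : Type} [Field F] [Fintype F] [AddCommGroup V] [Module F V] [FiniteDimensional F V]

/-- Replacing one member of a chamber. -/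
def SFlag.repl {B : V →ₗ[F] V →ₗ[F] F} {n : ℕ} (C : SFlag B (Finset.Icc 1 n)) (s : ℕ)
    (hs : s ∈ Finset.Icc 1 n) (X : Submodule F V) (h1 : C.space (s - 1) ≤ X)
    (h2 : s < n → X ≤ C.space (s + 1)) (h3 : IsTotIso B X) (h4 : finrank F X = s) :
    SFlag B (Finset.Icc 1 n) where
  space i := if i = s then X else C.space i
  isotropic i _ := by
    split_ifs
    · exact h3
    · exact C.iso' i
  finrank_eq i hi := by
    have := Finset.mem_Icc.1 hi
    by_cases h : i = s
    · rw [if_pos h, h4, h]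
    · rw [if_neg h]
      exact C.finrank' (by omega)
  mono i hi j hj hij := by
    have := Finset.mem_Icc.1 hi
    have := Finset.mem_Icc.1 hj
    by_cases hj' : j = s
    · rw [if_pos hj']
      split_ifs with h
      · exact le_rfl
      · exact (C.mono' (by omega) (by omega)).trans h1
    · rw [if_neg hj']
      split_ifs with h
      · exact (h2 (by omega)).trans (C.mono' (by omega) (by omega))
      · exact C.mono' hij (by omega)
  eq_bot i hi := by
    rw [if_neg (by rintro rfl; exact hi hs), C.eq_bot i hi]

lemma panel_aux {B : V →ₗ[F] V →ₗ[F] F} {n : ℕ} (C : SFlag B (Finset.Icc 1 n)) (s : ℕ)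
    (hs : s ∈ Finset.Icc 1 n) (U : Submodule F V) (hLU : C.space (s - 1) ≤ U)
    (hU : finrank F U = s + 1)
    (h : ∀ X : Submodule F V, C.space (s - 1) ≤ X → finrank F X = s →
      (X ≤ U ↔ IsTotIso B X ∧ (s < n → X ≤ C.space (s + 1)))) :
    Nat.card {D : SFlag B (Finset.Icc 1 n) // ∀ i, i ≠ s → C.space i = D.space i} =
      Fintype.card F + 1 := by
  have hs' := Finset.mem_Icc.1 hs
  have hcm := count_mid hLU
  have hfL : finrank F (C.space (s - 1)) = s - 1 := C.finrank' (by omega)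
  rw [hfL, hU, show s - 1 + 1 = s by omega] at hcm
  have hcard : Nat.card {D : SFlag B (Finset.Icc 1 n) // ∀ i, i ≠ s → C.space i = D.space i} =
      Nat.card {X : Submodule F V // C.space (s - 1) ≤ X ∧ X ≤ U ∧ finrank F X = s} := by
    apply Nat.card_congr
    refine Equiv.ofBijective (fun D => ⟨D.1.space s, ?_, ?_, D.1.finrank' hs'.2⟩) ⟨?_, ?_⟩
    · rw [D.2 (s - 1) (by omega)]
      exact D.1.mono' (by omega) hs'.2
    · rw [h]
      · refine ⟨D.1.iso' s, fun hsn => ?_⟩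
        rw [D.2 (s + 1) (by omega)]
        exact D.1.mono' (by omega) hsn
      · rw [D.2 (s - 1) (by omega)]
        exact D.1.mono' (by omega) hs'.2
      · exact D.1.finrank' hs'.2
    · intro D E hDE
      have hDE' : D.1.space s = E.1.space s := congrArg Subtype.val hDE
      apply Subtype.ext
      apply SFlag.ext'
      intro i _
      by_cases his : i = s
      · rw [his, hDE']
      · rw [← D.2 i his, ← E.2 i his]
    · rintro ⟨X, h1, h2, h3⟩
      obtain ⟨h4, h5⟩ := (h X h1 h3).1 h2
      refine ⟨⟨C.repl s hs X h1 h5 h4 h3, fun i hi => (if_neg hi).symm⟩, ?_⟩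
      apply Subtype.ext
      exact if_pos rfl
  rw [hcard]
  have hq : 1 < Fintype.card F := one_lt_cardF
  obtain ⟨t, rfl⟩ : ∃ t, s = t + 1 := ⟨s - 1, by omega⟩
  simp only [Nat.add_sub_cancel] at hcm ⊢
  obtain ⟨p, hp⟩ : ∃ p, Fintype.card F = p + 1 := ⟨Fintype.card F - 1, by omega⟩
  rw [hp] at hcm hq ⊢
  have e1 : (p + 1) ^ (t + 1) - (p + 1) ^ t = (p + 1) ^ t * p := by
    rw [pow_succ, mul_add, mul_one, Nat.add_sub_cancel]
  have e2 : (p + 1) ^ (t + 1 + 1) - (p + 1) ^ t = (p + 1 + 1) * ((p + 1) ^ t * p) := by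
    rw [Nat.sub_eq_iff_eq_add (Nat.pow_le_pow_right (by omega) (by omega))]
    ring
  rw [e1, e2] at hcm
  have hpos : 0 < (p + 1) ^ t * p := Nat.mul_pos (by positivity) (by omega)
  exact Nat.eq_of_mul_eq_mul_right hpos hcm

lemma panel_card {B : V →ₗ[F] V →ₗ[F] F} (hA : IsAltForm B) (hN : NondegForm B) {n : ℕ}
    (hd : finrank F V = 2 * n) (C : SFlag B (Finset.Icc 1 n)) (s : ℕ)
    (hs : s ∈ Finset.Icc 1 n) :
    Nat.card {D : SFlag B (Finset.Icc 1 n) // ∀ i, i ≠ s → C.space i = D.space i} =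
      Fintype.card F + 1 := by
  have hs' := Finset.mem_Icc.1 hs
  by_cases hsn : s < n
  · apply panel_aux C s hs (C.space (s + 1)) (C.mono' (by omega) hsn) (C.finrank' hsn)
    intro X _ _
    refine ⟨fun h => ⟨fun u hu w hw => C.iso' (s + 1) u (h hu) w (h hw), fun _ => h⟩,
      fun h => h.2 hsn⟩
  · have hfL : finrank F (C.space (s - 1)) = s - 1 := C.finrank' (by omega)
    have hb := finrank_bperp hA hN (C.space (s - 1))
    apply panel_aux C s hs (bperp B (C.space (s - 1))) (le_bperp_of_iso (C.iso' _) le_rfl)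
      (by omega)
    intro X h1 h2
    refine ⟨fun h => ⟨?_, fun h' => absurd h' hsn⟩, fun h => le_bperp_of_iso h.1 h1⟩
    have hlt : C.space (s - 1) < X := by
      refine lt_of_le_of_ne h1 fun heq => ?_
      rw [heq] at hfL
      omega
    obtain ⟨x, hx, hx'⟩ := SetLike.exists_of_lt hlt
    rw [eq_sup_span h1 (by omega) hx hx']
    exact isTotIso_sup_span hA (C.iso' _) (h hx)

end Panels

/-! ### Matrices -/

section Matrices

variable {F V : Type} [Field F] [Fintype F] [AddCommGroup V] [Module F V] [FiniteDimensional F V]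

noncomputable instance instFintypeSFlag (B : V →ₗ[F] V →ₗ[F] F) (J : Finset ℕ) :
    Fintype (SFlag B J) := Fintype.ofFinite _

/-- The opposition matrix. -/
noncomputable def oppM (B : V →ₗ[F] V →ₗ[F] F) (n : ℕ) :
    Matrix (SFlag B (Finset.Icc 1 n)) (SFlag B (Finset.Icc 1 n)) ℝ :=
  Matrix.of fun C D => if FlagOpp C D then 1 else 0

/-- The matrix of adjacency of type `s + 1`. -/
noncomputable def adjM (B : V →ₗ[F] V →ₗ[F] F) (n s : ℕ) :
    Matrix (SFlag B (Finset.Icc 1 n)) (SFlag B (Finset.Icc 1 n)) ℝ :=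
  Matrix.of fun C D => if Adj (s + 1) C D then 1 else 0

/-- The matrix of the panel equivalence relation of type `s + 1`. -/
noncomputable def panM (B : V →ₗ[F] V →ₗ[F] F) (n s : ℕ) :
    Matrix (SFlag B (Finset.Icc 1 n)) (SFlag B (Finset.Icc 1 n)) ℝ :=
  Matrix.of fun C D => if ∀ i, i ≠ s + 1 → C.space i = D.space i then 1 else 0

lemma panM_eq (B : V →ₗ[F] V →ₗ[F] F) (n s : ℕ) : panM B n s = adjM B n s + 1 := by
  ext C D
  simp only [panM, adjM, Matrix.of_apply, Matrix.add_apply, Matrix.one_apply, Adj]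
  by_cases h : C = D
  · subst h; simp
  · simp [h]

lemma panM_row {B : V →ₗ[F] V →ₗ[F] F} (hA : IsAltForm B) (hN : NondegForm B) {n : ℕ}
    (hd : finrank F V = 2 * n) (s : ℕ) (hs : s < n) (C : SFlag B (Finset.Icc 1 n)) :
    ∑ D, panM B n s C D = (Fintype.card F : ℝ) + 1 := by
  have h := panel_card hA hN hd C (s + 1) (Finset.mem_Icc.2 (by omega))
  rw [Nat.card_eq_fintype_card, Fintype.card_subtype] at h
  simp only [panM, Matrix.of_apply]
  rw [Finset.sum_boole, h]
  push_cast
  rfl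

lemma panM_sq {B : V →ₗ[F] V →ₗ[F] F} (hA : IsAltForm B) (hN : NondegForm B) {n : ℕ}
    (hd : finrank F V = 2 * n) (s : ℕ) (hs : s < n) :
    panM B n s * panM B n s = ((Fintype.card F : ℝ) + 1) • panM B n s := by
  ext C D
  rw [Matrix.mul_apply, Matrix.smul_apply, ← panM_row hA hN hd s hs C, smul_eq_mul, Finset.sum_mul]
  apply Finset.sum_congr rfl
  intro E _
  simp only [panM, Matrix.of_apply]
  by_cases h : ∀ i, i ≠ s + 1 → C.space i = E.space i
  · rw [if_pos h]
    congr 2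
    apply propext
    constructor
    · intro h' i hi; rw [h i hi, h' i hi]
    · intro h' i hi; rw [← h i hi, h' i hi]
  · rw [if_neg h]; simp

lemma adjM_quad {B : V →ₗ[F] V →ₗ[F] F} (hA : IsAltForm B) (hN : NondegForm B) {n : ℕ}
    (hd : finrank F V = 2 * n) (s : ℕ) (hs : s < n) :
    adjM B n s * adjM B n s =
      ((Fintype.card F : ℝ) - 1) • adjM B n s + (Fintype.card F : ℝ) • 1 := by
  have h := panM_sq hA hN hd s hs
  rw [panM_eq, add_mul, mul_add, mul_one, one_mul] at h
  have h' : adjM B n s * adjM B n s =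
      ((Fintype.card F : ℝ) + 1) • (adjM B n s + 1) - adjM B n s - (adjM B n s + 1) := by
    rw [← h]; abel
  rw [h']
  module

lemma adjM_row {B : V →ₗ[F] V →ₗ[F] F} (hA : IsAltForm B) (hN : NondegForm B) {n : ℕ}
    (hd : finrank F V = 2 * n) (s : ℕ) (hs : s < n) :
    (adjM B n s).mulVec 1 = (Fintype.card F : ℝ) • 1 := by
  have h : (panM B n s).mulVec 1 = ((Fintype.card F : ℝ) + 1) • 1 := by
    funext C
    simp only [Matrix.mulVec, dotProduct, Pi.one_apply, mul_one, Pi.smul_apply, smul_eq_mul]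
    exact panM_row hA hN hd s hs C
  rw [panM_eq, Matrix.add_mulVec, Matrix.one_mulVec, add_smul, one_smul] at h
  exact add_right_cancel h

/-- The product of adjacency matrices along a cyclic word of length `m` starting at `r`. -/
noncomputable def cycM (B : V →ₗ[F] V →ₗ[F] F) (n r m : ℕ) :
    Matrix (SFlag B (Finset.Icc 1 n)) (SFlag B (Finset.Icc 1 n)) ℝ :=
  ((List.range m).map (fun i => adjM B n ((r + i) % n))).prod

lemma cycM_zero (B : V →ₗ[F] V →ₗ[F] F) (n r : ℕ) : cycM B n r 0 = 1 := by simp [cycM]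

lemma cycM_succ (B : V →ₗ[F] V →ₗ[F] F) (n r m : ℕ) :
    cycM B n r (m + 1) = cycM B n r m * adjM B n ((r + m) % n) := by
  simp [cycM, List.range_succ]

lemma cycM_succ' (B : V →ₗ[F] V →ₗ[F] F) (n r m : ℕ) :
    cycM B n r (m + 1) = adjM B n (r % n) * cycM B n (r + 1) m := by
  simp only [cycM, List.range_succ_eq_map, List.map_cons, List.prod_cons, List.map_map, add_zero]
  congr 3
  funext i
  simp only [Function.comp]
  congr 2
  omega

lemma cycM_row {B : V →ₗ[F] V →ₗ[F] F} (hA : IsAltForm B) (hN : NondegForm B) {n : ℕ}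
    (hd : finrank F V = 2 * n) (hn : 0 < n) (r m : ℕ) :
    (cycM B n r m).mulVec 1 = (Fintype.card F : ℝ) ^ m • 1 := by
  induction m with
  | zero => simp [cycM_zero]
  | succ m ih =>
    rw [cycM_succ, ← Matrix.mulVec_mulVec, adjM_row hA hN hd _ (Nat.mod_lt _ hn),
      Matrix.mulVec_smul, ih, smul_smul, pow_succ, mul_comm]

lemma adjM_nonneg (B : V →ₗ[F] V →ₗ[F] F) (n s : ℕ) (C D) : 0 ≤ adjM B n s C D := by
  simp only [adjM, Matrix.of_apply]
  split_ifs <;> norm_num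

lemma cycM_nonneg (B : V →ₗ[F] V →ₗ[F] F) (n r m : ℕ) : ∀ C D, 0 ≤ cycM B n r m C D := by
  induction m with
  | zero =>
    intro C D
    rw [cycM_zero, Matrix.one_apply]
    split_ifs <;> norm_num
  | succ m ih =>
    intro C D
    rw [cycM_succ, Matrix.mul_apply]
    exact Finset.sum_nonneg fun E _ => mul_nonneg (ih C E) (adjM_nonneg B n _ E D)

lemma cycM_gallery {B : V →ₗ[F] V →ₗ[F] F} {n : ℕ} (hn : 1 ≤ n) {g : ℕ → V}
    (hg : GoodSeq B n g) (r m : ℕ) : 1 ≤ cycM B n r m (winFlag hg r) (winFlag hg (r + m)) := by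
  induction m with
  | zero => simp [cycM_zero]
  | succ m ih =>
    rw [cycM_succ, Matrix.mul_apply]
    have h1 : adjM B n ((r + m) % n) (winFlag hg (r + m)) (winFlag hg (r + (m + 1))) = 1 :=
      if_pos (winFlag_adj hn hg (r + m))
    calc (1 : ℝ) ≤ cycM B n r m (winFlag hg r) (winFlag hg (r + m)) *
          adjM B n ((r + m) % n) (winFlag hg (r + m)) (winFlag hg (r + (m + 1))) := by
          rw [h1, mul_one]; exact ih
      _ ≤ _ := Finset.single_le_sum
        (f := fun E => cycM B n r m (winFlag hg r) E *
          adjM B n ((r + m) % n) E (winFlag hg (r + (m + 1))))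
        (fun E _ => mul_nonneg (cycM_nonneg B n r m _ E) (adjM_nonneg B n _ E _))
        (Finset.mem_univ _)

lemma cycM_eq_oppM {B : V →ₗ[F] V →ₗ[F] F} (hA : IsAltForm B) (hN : NondegForm B) {n : ℕ}
    (hd : finrank F V = 2 * n) (r : ℕ) (hr : r < n) : cycM B n r (n * n) = oppM B n := by
  ext C D
  have hle : ∀ E ∈ Finset.univ, oppM B n C E ≤ cycM B n r (n * n) C E := by
    intro E _
    simp only [oppM, Matrix.of_apply]
    split_ifs with h
    · obtain ⟨g, hg, h1, h2⟩ := exists_gallery hA hN hd h r hr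
      have := cycM_gallery (by omega) hg r (n * n)
      rwa [h1, h2] at this
    · exact cycM_nonneg B n r _ C E
  have hsum : ∑ E, cycM B n r (n * n) C E = (Fintype.card F : ℝ) ^ (n * n) := by
    have := congrFun (cycM_row hA hN hd (by omega) r (n * n)) C
    simpa [Matrix.mulVec, dotProduct] using this
  have hsum' : (Fintype.card F : ℝ) ^ (n * n) ≤ ∑ E, oppM B n C E := by
    have h := card_opp_ge hA hN hd C
    rw [Nat.card_eq_fintype_card, Fintype.card_subtype] at h
    simp only [oppM, Matrix.of_apply]
    rw [Finset.sum_boole]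
    exact_mod_cast h
  have heq := (Finset.sum_eq_sum_iff_of_le hle).1
    (le_antisymm (Finset.sum_le_sum hle) (hsum ▸ hsum'))
  exact (heq D (Finset.mem_univ _)).symm

lemma cycM_eq_oppM' {B : V →ₗ[F] V →ₗ[F] F} (hA : IsAltForm B) (hN : NondegForm B) {n : ℕ}
    (hd : finrank F V = 2 * n) (r : ℕ) (hr : r ≤ n) (hn : 0 < n) :
    cycM B n r (n * n) = oppM B n := by
  rcases hr.lt_or_eq with h | rfl
  · exact cycM_eq_oppM hA hN hd r h
  · rw [← cycM_eq_oppM hA hN hd 0 hn]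
    simp [cycM]

lemma adjM_comm {B : V →ₗ[F] V →ₗ[F] F} (hA : IsAltForm B) (hN : NondegForm B) {n : ℕ}
    (hd : finrank F V = 2 * n) (s : ℕ) (hs : s < n) :
    adjM B n s * oppM B n = oppM B n * adjM B n s := by
  have hn : 0 < n := by omega
  obtain ⟨k, hk⟩ : ∃ k, n * n = k + 1 := ⟨n * n - 1, by have := Nat.mul_pos hn hn; omega⟩
  have h1 := cycM_eq_oppM' hA hN hd s hs.le hn
  have h2 := cycM_eq_oppM' hA hN hd (s + 1) hs hn
  rw [hk, cycM_succ', Nat.mod_eq_of_lt hs] at h1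
  rw [hk, cycM_succ, show s + 1 + k = s + n * n by omega, Nat.add_mul_mod_self_left,
    Nat.mod_eq_of_lt hs] at h2
  calc adjM B n s * oppM B n = adjM B n s * (cycM B n (s + 1) k * adjM B n s) := by rw [h2]
    _ = (adjM B n s * cycM B n (s + 1) k) * adjM B n s := (mul_assoc _ _ _).symm
    _ = _ := by rw [h1]

lemma oppM_row {B : V →ₗ[F] V →ₗ[F] F} (hA : IsAltForm B) (hN : NondegForm B) {n : ℕ}
    (hd : finrank F V = 2 * n) (hn : 0 < n) :
    (oppM B n).mulVec 1 = (Fintype.card F : ℝ) ^ (n * n) • 1 := by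
  rw [← cycM_eq_oppM hA hN hd 0 hn, cycM_row hA hN hd hn]

lemma oppM_symm {B : V →ₗ[F] V →ₗ[F] F} (hA : IsAltForm B) (hN : NondegForm B) {n : ℕ} :
    (oppM B n).IsSymm := by
  ext C D
  simp only [oppM, Matrix.of_apply, Matrix.transpose_apply]
  congr 1
  exact propext ⟨opp_symm hA hN, opp_symm hA hN⟩

/-- The indicator function of a set of chambers. -/
noncomputable def indF {B : V →ₗ[F] V →ₗ[F] F} {n : ℕ} (S : Set (SFlag B (Finset.Icc 1 n))) :
    SFlag B (Finset.Icc 1 n) → ℝ := fun C => if C ∈ S then 1 else 0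

lemma sharp_opp {B : V →ₗ[F] V →ₗ[F] F} (hA : IsAltForm B) (hN : NondegForm B) {n : ℕ}
    (hd : finrank F V = 2 * n) (hn : 1 ≤ n) (S : Set (SFlag B (Finset.Icc 1 n)))
    (hS : IsEKRFlags S)
    (hcard : (S.ncard : ℝ) =
      (Nat.card (SFlag B (Finset.Icc 1 n)) : ℝ) / ((Fintype.card F : ℝ) ^ n + 1)) :
    (oppM B n).mulVec (indF S) = (Fintype.card F : ℝ) ^ (n * (n - 1)) • (1 - indF S) := by
  refine sharp_eq n hn (Fintype.card F : ℝ) (by exact_mod_cast Fintype.card_pos) (adjM B n)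
    (oppM B n) (oppM_symm hA hN) (adjM_quad hA hN hd) ?_ (adjM_comm hA hN hd)
    (oppM_row hA hN hd hn) (indF S) ?_ ?_ ?_
  · rw [← cycM_eq_oppM hA hN hd 0 hn]
    simp [cycM]
  · simp only [dotProduct, Matrix.mulVec]
    apply Finset.sum_eq_zero
    intro C _
    by_cases hC : C ∈ S
    · rw [mul_eq_zero]
      right
      apply Finset.sum_eq_zero
      intro D _
      by_cases hD : D ∈ S
      · simp [oppM, hS C hC D hD]
      · simp [indF, hD]
    · simp [indF, hC]
  · simp only [dotProduct]
    apply Finset.sum_congr rfl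
    intro C _
    by_cases hC : C ∈ S <;> simp [indF, hC]
  · rw [← Nat.card_eq_fintype_card, ← hcard, Set.ncard_eq_toFinset_card']
    simp only [dotProduct, indF, Pi.one_apply, mul_one]
    rw [Finset.sum_boole]
    congr 2
    ext C
    simp

end Matrices

/-! ### Conclusion -/

section Conclusion

variable {F V : Type} [Field F] [Fintype F] [AddCommGroup V] [Module F V] [FiniteDimensional F V]

lemma bernoulli_bound (n : ℕ) (hn : 1 ≤ n) (q : ℝ) (hq : (n : ℝ) ^ 2 + 1 ≤ q) :
    ((n : ℝ) - 1) * q ^ n < n * (q - 1) ^ n := by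
  have hn' : (1 : ℝ) ≤ n := by exact_mod_cast hn
  have hq1 : 1 < q := by nlinarith
  have hq0 : 0 < q := by linarith
  have h1 := one_add_mul_le_pow (a := -(1 / q)) (by
    have : 1 / q ≤ 1 := by rw [div_le_one hq0]; linarith
    linarith) n
  have h2 : (q - 1) ^ n = q ^ n * (1 + -(1 / q)) ^ n := by
    rw [← mul_pow]
    congr 1
    field_simp
    ring
  have h3 : (n : ℝ) - 1 < n * (1 + n * -(1 / q)) := by
    have : (n : ℝ) ^ 2 / q < 1 := by rw [div_lt_one hq0]; linarith
    have h4 : (n : ℝ) * (1 + n * -(1 / q)) = n - n ^ 2 / q := by field_simp; ring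
    rw [h4]; linarith
  have hp : 0 < q ^ n := pow_pos hq0 n
  rw [h2]
  calc ((n : ℝ) - 1) * q ^ n < (n * (1 + n * -(1 / q))) * q ^ n := mul_lt_mul_of_pos_right h3 hp
    _ = n * (q ^ n * (1 + n * -(1 / q))) := by ring
    _ ≤ _ := by gcongr

lemma card_bound {B : V →ₗ[F] V →ₗ[F] F} (hA : IsAltForm B) (hN : NondegForm B) {n : ℕ}
    (hd : finrank F V = 2 * n) (hn : 1 ≤ n) (hq : n ^ 2 + 1 ≤ Fintype.card F)
    (S : Set (SFlag B (Finset.Icc 1 n)))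
    (hcard : (S.ncard : ℝ) =
      (Nat.card (SFlag B (Finset.Icc 1 n)) : ℝ) / ((Fintype.card F : ℝ) ^ n + 1)) :
    ((n : ℝ) - 1) * S.ncard < n * (Fintype.card F : ℝ) ^ (n * (n - 1)) := by
  have h1 := card_flags_le hA hN hd n le_rfl
  have hq1 : 1 < Fintype.card F := one_lt_cardF
  have h2 : (Nat.card (SFlag B (Finset.Icc 1 n)) : ℝ) * ((Fintype.card F : ℝ) - 1) ^ n *
      (Fintype.card F : ℝ) ^ (n * n) ≤ (Fintype.card F : ℝ) ^ (n * (2 * n + 1)) := by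
    have : ((Fintype.card F - 1 : ℕ) : ℝ) = (Fintype.card F : ℝ) - 1 := by
      rw [Nat.cast_sub hq1.le, Nat.cast_one]
    rw [← this]
    exact_mod_cast h1
  have hq' : (n : ℝ) ^ 2 + 1 ≤ (Fintype.card F : ℝ) := by exact_mod_cast hq
  have hq1' : (1 : ℝ) < (Fintype.card F : ℝ) := by exact_mod_cast hq1
  have hb := bernoulli_bound n hn _ hq'
  generalize (Fintype.card F : ℝ) = q at *
  generalize (Nat.card (SFlag B (Finset.Icc 1 n)) : ℝ) = N at *
  have hx0 : (0 : ℝ) ≤ (S.ncard : ℝ) := by positivity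
  generalize (S.ncard : ℝ) = x at *
  have hn' : (1 : ℝ) ≤ n := by exact_mod_cast hn
  have hqn : 0 < q ^ n := by positivity
  have hpn : 0 < (q - 1) ^ n := pow_pos (by linarith) n
  have hN : x * (q ^ n + 1) = N := by
    rw [hcard]; field_simp
  obtain ⟨k, rfl⟩ : ∃ k, n = k + 1 := ⟨n - 1, by omega⟩
  simp only [Nat.add_sub_cancel]
  set μ := q ^ ((k + 1) * k) with hμ
  have hμ0 : 0 < μ := by positivity
  have h3 : x * (q - 1) ^ (k + 1) ≤ μ * q ^ (k + 1) := by
    have hc : 0 < q ^ (k + 1) * q ^ ((k + 1) * (k + 1)) := by positivity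
    apply le_of_mul_le_mul_right _ hc
    calc x * (q - 1) ^ (k + 1) * (q ^ (k + 1) * q ^ ((k + 1) * (k + 1)))
        ≤ x * (q - 1) ^ (k + 1) * ((q ^ (k + 1) + 1) * q ^ ((k + 1) * (k + 1))) := by
          gcongr; linarith
      _ = N * (q - 1) ^ (k + 1) * q ^ ((k + 1) * (k + 1)) := by rw [← hN]; ring
      _ ≤ _ := h2
      _ = _ := by rw [hμ]; ring
  have h4 : 0 ≤ ((k + 1 : ℕ) : ℝ) - 1 := by linarith
  apply lt_of_mul_lt_mul_right _ hpn.le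
  calc (((k + 1 : ℕ) : ℝ) - 1) * x * (q - 1) ^ (k + 1)
      = (((k + 1 : ℕ) : ℝ) - 1) * (x * (q - 1) ^ (k + 1)) := by ring
    _ ≤ (((k + 1 : ℕ) : ℝ) - 1) * (μ * q ^ (k + 1)) := mul_le_mul_of_nonneg_left h3 h4
    _ = ((((k + 1 : ℕ) : ℝ) - 1) * q ^ (k + 1)) * μ := by ring
    _ < (((k + 1 : ℕ) : ℝ) * (q - 1) ^ (k + 1)) * μ := mul_lt_mul_of_pos_right hb hμ0
    _ = _ := by ring

lemma final_count {B : V →ₗ[F] V →ₗ[F] F} (hA : IsAltForm B) (hN : NondegForm B) {n : ℕ}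
    (hd : finrank F V = 2 * n) (hn : 1 ≤ n) (S : Set (SFlag B (Finset.Icc 1 n)))
    (hS : IsEKRFlags S)
    (hcard : (S.ncard : ℝ) =
      (Nat.card (SFlag B (Finset.Icc 1 n)) : ℝ) / ((Fintype.card F : ℝ) ^ n + 1))
    (hb : ((n : ℝ) - 1) * S.ncard < n * (Fintype.card F : ℝ) ^ (n * (n - 1)))
    (C : SFlag B (Finset.Icc 1 n)) (hC : C ∈ S)
    (hl : ∀ s ∈ Finset.Icc 1 n, ¬ Heavy S s (C.space s)) : False := by
  have hT := sharp_opp hA hN hd hn S hS hcard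
  set μ : ℝ := (Fintype.card F : ℝ) ^ (n * (n - 1)) with hμ
  set S' : Finset (SFlag B (Finset.Icc 1 n)) := Finset.univ.filter (· ∈ S) with hS'
  have hSc : S.ncard = S'.card := by
    rw [Set.ncard_eq_toFinset_card']
    congr 1
    ext D
    simp [hS']
  have hbad : ∀ s ∈ Finset.Icc 1 n,
      ((S'.filter (fun E => ¬ bperp B (C.space s) ⊓ E.space s = ⊥)).card : ℝ) ≤ S'.card - μ := by
    intro s hs
    have h1 := hl s hs
    unfold Heavy at h1
    push Not at h1
    obtain ⟨D, hDs, hD⟩ := h1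
    have h2 := congrFun hT D
    have h3 : (oppM B n).mulVec (indF S) D =
        ((S'.filter (fun E => FlagOpp D E)).card : ℝ) := by
      rw [hS', Finset.filter_filter, ← Finset.sum_boole]
      simp only [Matrix.mulVec, dotProduct, oppM, indF, Matrix.of_apply]
      apply Finset.sum_congr rfl
      intro E _
      by_cases h : E ∈ S <;> by_cases h' : FlagOpp D E <;> simp [h, h']
    rw [h3] at h2
    have h4 : ((S'.filter (fun E => FlagOpp D E)).card : ℝ) = μ := by
      rw [h2]; simp [indF, hD]
    have h5 : (S'.filter (fun E => FlagOpp D E)).card ≤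
        (S'.filter (fun E => bperp B (C.space s) ⊓ E.space s = ⊥)).card := by
      apply Finset.card_le_card
      intro E hE
      rw [Finset.mem_filter] at hE ⊢
      refine ⟨hE.1, ?_⟩
      rw [← hDs]
      exact hE.2 s hs
    have h6 := Finset.card_filter_add_card_filter_not (s := S')
      (fun E => bperp B (C.space s) ⊓ E.space s = ⊥)
    have h5' : ((S'.filter (fun E => FlagOpp D E)).card : ℝ) ≤
        ((S'.filter (fun E => bperp B (C.space s) ⊓ E.space s = ⊥)).card : ℝ) := by
      exact_mod_cast h5
    have h6' : ((S'.filter (fun E => bperp B (C.space s) ⊓ E.space s = ⊥)).card : ℝ) +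
        ((S'.filter (fun E => ¬ bperp B (C.space s) ⊓ E.space s = ⊥)).card : ℝ) = S'.card := by
      exact_mod_cast h6
    linarith
  have hcover : S' ⊆ (Finset.Icc 1 n).biUnion
      (fun s => S'.filter (fun E => ¬ bperp B (C.space s) ⊓ E.space s = ⊥)) := by
    intro E hE
    have hES : E ∈ S := (Finset.mem_filter.1 hE).2
    have h := hS C hC E hES
    unfold FlagOpp at h
    push Not at h
    obtain ⟨i, hi, hi'⟩ := h
    rw [Finset.mem_biUnion]
    exact ⟨i, hi, Finset.mem_filter.2 ⟨hE, hi'⟩⟩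
  have h7 : (S'.card : ℝ) ≤ n * (S'.card - μ) := by
    calc (S'.card : ℝ) ≤ ((∑ s ∈ Finset.Icc 1 n,
          (S'.filter (fun E => ¬ bperp B (C.space s) ⊓ E.space s = ⊥)).card : ℕ) : ℝ) := by
          exact_mod_cast (Finset.card_le_card hcover).trans Finset.card_biUnion_le
      _ = ∑ s ∈ Finset.Icc 1 n,
          ((S'.filter (fun E => ¬ bperp B (C.space s) ⊓ E.space s = ⊥)).card : ℝ) := by push_cast; rfl
      _ ≤ ∑ _s ∈ Finset.Icc 1 n, ((S'.card : ℝ) - μ) := Finset.sum_le_sum hbad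
      _ = n * (S'.card - μ) := by simp [mul_sub]
  rw [hSc] at hb
  linarith

end Conclusion

/-- For large `q`, a ratio-sharp EKR-set of chambers contains no light
chamber: every chamber in the set has a heavy `s`-space for some `s ∈ [n]`. -/
theorem stmt_5 (n : ℕ) (hn : 3 ≤ n) :
    ∃ q₀ : ℕ, ∀ (F V : Type) [Field F] [Fintype F] [AddCommGroup V] [Module F V],
      ∀ q : ℕ, Fintype.card F = q → q₀ ≤ q →
      ∀ B : V →ₗ[F] V →ₗ[F] F, IsAltForm B → NondegForm B →
      FiniteDimensional F V → Module.finrank F V = 2 * n →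
      ∀ 𝓕 : Set (SFlag B (Finset.Icc 1 n)),
        IsEKRFlags 𝓕 →
        (𝓕.ncard : ℝ) = (Nat.card (SFlag B (Finset.Icc 1 n)) : ℝ) / ((q : ℝ) ^ n + 1) →
        ∀ C ∈ 𝓕, ∃ s ∈ Finset.Icc 1 n, Heavy 𝓕 s (SFlag.space C s) := by
  refine ⟨n ^ 2 + 1, ?_⟩
  intro F V _ _ _ _ q hq hq0 B hA hN hfd hd S hS hcard C hC
  subst hq
  by_contra hcon
  push Not at hcon
  exact final_count hA hN hd (by omega) S hS hcard
    (card_bound hA hN hd (by omega) (by omega) S hcard) C hC hcon
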